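/- arXiv:1609.07604 — 10 statements merged into one kernel-verified Lean document; each statement's English description precedes it below -/
import Mathlib

section
/- Let G be a finite group and τ an automorphism of G with τ∘τ = id. Suppose that τ is fixed-point-free on the dual of G, i.e., for every irreducible finite-dimensional complex representation π of G that is not isomorphic to the trivial representation, the representations π and π∘τ are not isomorphic. Then G is abelian and τ(g) = g⁻¹ for every g ∈ G. -/
/-- A finite-dimensional complex representation is irreducible if the space is nonzero and
has no invariant subspace other than `⊥` and `⊤`. -/
def IsIrreducibleRep {G V : Type} [Group G] [AddCommGroup V] [Module ℂ V]
    (ρ : Representation ℂ G V) : Prop :=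
  Nontrivial V ∧ ∀ p : Submodule ℂ V, (∀ (g : G), ∀ v ∈ p, ρ g v ∈ p) → p = ⊥ ∨ p = ⊤

/-- Two representations are isomorphic if there is a linear equivalence intertwining them. -/
def RepIso {G V W : Type} [Group G] [AddCommGroup V] [Module ℂ V]
    [AddCommGroup W] [Module ℂ W]
    (ρ : Representation ℂ G V) (σ : Representation ℂ G W) : Prop :=
  ∃ e : V ≃ₗ[ℂ] W, ∀ (g : G) (v : V), e (ρ g v) = σ g (e v)

/-!
For an endomorphism `φ` of `G` and a representation `ρ`, both `∑ g, ρ (g / φ g)` and `∑ g, ρ g`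
intertwine `ρ ∘ φ` with `ρ`. If `ρ` is irreducible and `ρ ≇ ρ ∘ φ`, both vanish by Schur's lemma;
if `ρ` is trivial, they visibly agree. Hence the elements `∑ g, g / φ g` and `∑ g, g` of the
semisimple ring `k[G]` act equally on every simple module, so they are equal, and comparing
coefficients shows that `g ↦ g / φ g` is a bijection of `G`. This says that `φ` has no fixed point
besides `1`, and an involutive such `φ` is inversion on an abelian group.
-/

open Function Representation MonoidHom
open scoped MonoidAlgebra

universe u v

section Twisted

variable {k G V : Type*} [Semiring k] [Group G] [Fintype G] [AddCommMonoid V] [Module k V]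

/-- The norm `∑ g, ρ g` of a representation, regarded as an intertwining map from the twist
`ρ ∘ φ` of `ρ` by an endomorphism `φ`. -/
def normIntertwiningMap (ρ : Representation k G V) (φ : G →* G) :
    IntertwiningMap (ρ.comp φ) ρ where
  toLinearMap := ρ.norm
  isIntertwining' g := by
    rw [MonoidHom.comp_apply, norm_comp_self, self_comp_norm]

/-- The twisted norm `∑ g, ρ (g / φ g)` of a representation, an intertwining map from the twist
`ρ ∘ φ` of `ρ` by the endomorphism `φ`. -/
def twistedNorm (ρ : Representation k G V) (φ : G →* G) :
    IntertwiningMap (ρ.comp φ) ρ where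
  toLinearMap := ∑ g, ρ (commutatorMap φ g)
  isIntertwining' h := by
    change (∑ g, ρ (commutatorMap φ g)) * ρ (φ h) = ρ h * ∑ g, ρ (commutatorMap φ g)
    simp only [Finset.sum_mul, Finset.mul_sum, ← map_mul]
    refine (Fintype.sum_equiv (Equiv.mulLeft h) _ _ fun g ↦ ?_).symm
    simp [div_eq_mul_inv, mul_assoc]

theorem twistedNorm_eq_norm_of_isTrivial (ρ : Representation k G V) [ρ.IsTrivial] (φ : G →* G) :
    (twistedNorm ρ φ).toLinearMap = ρ.norm := by
  simp [twistedNorm, Representation.norm]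

end Twisted

theorem isTrivial_of_equiv {k G V W : Type*} [Semiring k] [Monoid G] [AddCommMonoid V]
    [Module k V] [AddCommMonoid W] [Module k W] {ρ : Representation k G V}
    {σ : Representation k G W} [σ.IsTrivial] (e : ρ.Equiv σ) : ρ.IsTrivial where
  out g := LinearMap.ext fun v ↦ EquivLike.injective e <| by
    simpa using e.toIntertwiningMap.isIntertwining _ _ g v

theorem subsingleton_intertwiningMap_of_isEmpty_equiv {k G V : Type*} [Field k] [Monoid G]
    [AddCommGroup V] [Module k V] [FiniteDimensional k V] {ρ σ : Representation k G V}
    [ρ.IsIrreducible] [IsEmpty (ρ.Equiv σ)] : Subsingleton (IntertwiningMap σ ρ) := by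
  refine ⟨fun f g ↦ sub_eq_zero.mp ?_⟩
  refine (IsIrreducible.surjective_or_eq_zero (f - g)).resolve_left fun hsurj ↦ ?_
  have hinj : Injective (f - g) := LinearMap.injective_iff_surjective.mpr hsurj
  exact isEmptyElim ((f - g).ofBijective ⟨hinj, hsurj⟩).symm

theorem asAlgebraHom_ofModule' (k G M : Type*) [CommSemiring k] [Monoid G] [AddCommMonoid M]
    [Module k M] [Module k[G] M] [IsScalarTower k k[G] M] :
    (ofModule' M : Representation k G M).asAlgebraHom = Algebra.lsmul k k M :=
  (MonoidAlgebra.lift k (Module.End k M) G).apply_symm_apply _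

theorem isIrreducible_ofModule' (k G M : Type*) [Field k] [Monoid G] [AddCommGroup M]
    [Module k M] [Module k[G] M] [IsScalarTower k k[G] M] [IsSimpleModule k[G] M] :
    (ofModule' M : Representation k G M).IsIrreducible := by
  let ρ : Representation k G M := ofModule' M
  let e : ρ.asModule ≃ₗ[k[G]] M :=
    { ρ.asModuleEquiv with
      map_smul' := by simp [ρ, asAlgebraHom_ofModule'] }
  exact (irreducible_iff_isSimpleModule_asModule ρ).mpr (IsSimpleModule.congr e)

theorem monoidAlgebra_eq_of_forall_asAlgebraHom_eq {k : Type v} {G : Type u} [Field k] [Group G]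
    [Finite G] [NeZero (Nat.card G : k)] {a b : k[G]}
    (h : ∀ (V : Type max u v) [AddCommGroup V] [Module k V] [FiniteDimensional k V]
      (ρ : Representation k G V) [ρ.IsIrreducible], ρ.asAlgebraHom a = ρ.asAlgebraHom b) :
    a = b := by
  suffices a - b ∈ Ring.jacobson k[G] by
    rwa [IsSemisimpleRing.jacobson_eq_bot, Ideal.mem_bot, sub_eq_zero] at this
  rw [Ring.jacobson_eq_sInf_isMaximal, Ideal.mem_sInf]
  intro m hm
  have : IsSimpleModule k[G] (k[G] ⧸ m) :=
    isSimpleModule_iff_isCoatom.mpr (Ideal.isMaximal_def.mp hm)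
  have := isIrreducible_ofModule' k G (k[G] ⧸ m)
  have hab := LinearMap.congr_fun (h _ (ofModule' (k[G] ⧸ m))) (Submodule.Quotient.mk 1)
  rw [← Submodule.Quotient.eq]
  simpa [asAlgebraHom_ofModule', ← Submodule.Quotient.mk_smul] using hab

theorem surjective_of_sum_of_eq_sum_of {k G ι : Type*} [Semiring k] [Nontrivial k] [MulOneClass G]
    [Fintype G] [Fintype ι] {f : ι → G}
    (h : ∑ i, MonoidAlgebra.of k G (f i) = ∑ g, MonoidAlgebra.of k G g) : Surjective f := by
  classical
  intro x
  by_contra! hx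
  have hcoeff := congr(($h).coeff x)
  simp [MonoidAlgebra.coeff_sum, Finsupp.finsetSum_apply, Finsupp.single_apply, hx] at hcoeff

/-- An endomorphism `φ` is fixed-point-free on the dual of `G` over `k` if no nontrivial irreducible
finite-dimensional representation `ρ` over `k` is isomorphic to `ρ ∘ φ`. The universe `max u v` is
the one of `k[G]`, whose simple quotients exhaust the irreducible representations up to
isomorphism. -/
def FixedPointFreeOnDual (k : Type v) {G : Type u} [Field k] [Group G] (φ : G →* G) : Prop :=
  ∀ (V : Type max u v) [AddCommGroup V] [Module k V] [FiniteDimensional k V]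
    (ρ : Representation k G V) [ρ.IsIrreducible],
    IsEmpty (ρ.Equiv (.trivial k G k)) → IsEmpty (ρ.Equiv (ρ.comp φ))

section

variable {k : Type v} {G : Type u} [Field k] [Group G] {φ : G →* G}

theorem twistedNorm_eq_norm [Fintype G] (hφ : FixedPointFreeOnDual k φ) {V : Type max u v}
    [AddCommGroup V] [Module k V] [FiniteDimensional k V] (ρ : Representation k G V)
    [ρ.IsIrreducible] : (twistedNorm ρ φ).toLinearMap = ρ.norm := by
  rcases isEmpty_or_nonempty (ρ.Equiv (.trivial k G k)) with hne | ⟨⟨e⟩⟩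
  · have := hφ V ρ hne
    have := subsingleton_intertwiningMap_of_isEmpty_equiv (ρ := ρ) (σ := ρ.comp φ)
    exact congr(($(Subsingleton.elim (twistedNorm ρ φ) (normIntertwiningMap ρ φ))).toLinearMap)
  · have := isTrivial_of_equiv e
    exact twistedNorm_eq_norm_of_isTrivial ρ φ

variable [Finite G] [NeZero (Nat.card G : k)]

theorem commutatorMap_surjective_of_fixedPointFreeOnDual (hφ : FixedPointFreeOnDual k φ) :
    Surjective (commutatorMap φ) := by
  have := Fintype.ofFinite G
  refine surjective_of_sum_of_eq_sum_of (k := k) <|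
    monoidAlgebra_eq_of_forall_asAlgebraHom_eq fun V _ _ _ ρ _ ↦ ?_
  simpa [twistedNorm, Representation.norm] using twistedNorm_eq_norm hφ ρ

theorem fixedPointFree_of_fixedPointFreeOnDual (hφ : FixedPointFreeOnDual k φ) :
    FixedPointFree φ := by
  have hinj : Injective (commutatorMap φ) :=
    Finite.injective_iff_surjective.mpr (commutatorMap_surjective_of_fixedPointFreeOnDual hφ)
  intro g hg
  exact hinj (by simp [hg])

theorem fixedPointFree_on_dual_implies_abelian_inverse_general (hinv : Involutive φ)
    (hφ : FixedPointFreeOnDual k φ) : (∀ a b : G, a * b = b * a) ∧ ∀ g : G, φ g = g⁻¹ := by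
  have hfree := fixedPointFree_of_fixedPointFreeOnDual hφ
  exact ⟨hfree.commute_all_of_involutive hinv, congrFun (hfree.coe_eq_inv_of_involutive hinv)⟩

end

section

variable {G V W : Type} [Group G] [AddCommGroup V] [Module ℂ V] [AddCommGroup W] [Module ℂ W]

theorem isIrreducibleRep_of_isIrreducible (ρ : Representation ℂ G V) [ρ.IsIrreducible] :
    IsIrreducibleRep ρ := by
  refine ⟨IsSimpleModule.nontrivial ℂ[G] ρ.asModule, fun p hp ↦ ?_⟩
  exact (eq_bot_or_eq_top (⟨p, hp⟩ : Subrepresentation ρ)).imp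
    (congrArg Subrepresentation.toSubmodule) (congrArg Subrepresentation.toSubmodule)

theorem repIso_iff_nonempty_equiv {ρ : Representation ℂ G V} {σ : Representation ℂ G W} :
    RepIso ρ σ ↔ Nonempty (ρ.Equiv σ) :=
  ⟨fun ⟨e, he⟩ ↦ ⟨.mk e fun g ↦ LinearMap.ext (he g)⟩,
    fun ⟨e⟩ ↦ ⟨e.toLinearEquiv, e.toIntertwiningMap.isIntertwining _ _⟩⟩

end

/-- If `τ` is an order-two automorphism of a finite group `G` which is fixed-point-free on the
dual of `G` (no nontrivial irreducible complex representation `π` is isomorphic to `π ∘ τ`),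
then `G` is abelian and `τ g = g⁻¹` for all `g`. -/
theorem fixedPointFree_on_dual_implies_abelian_inverse
    {G : Type} [Group G] [Finite G] (τ : G ≃* G)
    (hτ : ∀ g : G, τ (τ g) = g)
    (hfpf : ∀ (V : Type) [AddCommGroup V] [Module ℂ V] [FiniteDimensional ℂ V]
      (ρ : Representation ℂ G V), IsIrreducibleRep ρ →
      ¬ RepIso ρ (Representation.trivial ℂ (G := G) (V := ℂ)) →
      ¬ RepIso ρ (ρ.comp τ.toMonoidHom)) :
    (∀ a b : G, a * b = b * a) ∧ ∀ g : G, τ g = g⁻¹ := by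
  refine fixedPointFree_on_dual_implies_abelian_inverse_general (k := ℂ) (φ := τ.toMonoidHom) hτ ?_
  intro V _ _ _ ρ _
  simpa only [← not_nonempty_iff, ← repIso_iff_nonempty_equiv] using
    hfpf V ρ (isIrreducibleRep_of_isIrreducible ρ)
end

section
/- Let G be a finite group, V a nonzero finite-dimensional complex inner product space, π : G → U(V) an irreducible unitary representation, τ an automorphism of G, and W a self-adjoint unitary operator on V satisfying W·π(g)·W⁻¹ = π(τ(g)) for all g ∈ G. Then Σ_{g∈G} Tr(π(g))·π(g)⁻¹ + Σ_{g∈G} Tr(π(g)·W)·W·π(g)⁻¹ = (2·|G| / dim V)·id_V. -/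
open scoped BigOperators

/-!
By Schur's lemma, which says that `algebraMap k (ρ.IntertwiningMap ρ)` is surjective, the sum of
the conjugates `ρ g ∘ X ∘ ρ g⁻¹` is the scalar `|G| * Tr X / dim V`. Evaluating this identity for
operators `X` of rank one gives the orthogonality relation
`Σ_g Tr(ρ g ∘ A) • ρ g⁻¹ = (|G| / dim V) • A` for `A` of rank one, hence for every `A`.
Taking `A = 1`, and `A = W` followed by composition with the involution `W`, each of the two sums
is `(|G| / dim V) • 1`.
-/

theorem linearMap_induction_smulRight {R M N : Type*} [CommRing R] [AddCommGroup M]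
    [AddCommGroup N] [Module R M] [Module R N] [Module.Free R M] [Module.Finite R M]
    {p : (M →ₗ[R] N) → Prop} (smulRight : ∀ (φ : Module.Dual R M) (n : N), p (φ.smulRight n))
    (add : ∀ A B, p A → p B → p (A + B)) (A : M →ₗ[R] N) : p A := by
  obtain ⟨t, rfl⟩ := (dualTensorHomEquiv R M N).surjective A
  induction t using TensorProduct.induction_on with
  | zero => simpa only [map_zero, LinearMap.zero_smulRight] using smulRight 0 0
  | tmul φ n =>
    have tmul_eq : dualTensorHomEquiv R M N (φ ⊗ₜ n) = φ.smulRight n := by ext; simp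
    exact tmul_eq ▸ smulRight φ n
  | add s t hs ht => simpa only [map_add] using add _ _ hs ht

section ConjugationSum

variable {G k V : Type*} [Group G] [Fintype G] [CommSemiring k] [AddCommMonoid V] [Module k V]
  (ρ : Representation k G V)

theorem norm_linHom_smulRight_apply (φ : Module.Dual k V) (u a : V) :
    (ρ.linHom ρ).norm (φ.smulRight u) a = ∑ g : G, φ (ρ g a) • ρ g⁻¹ u :=
  calc (ρ.linHom ρ).norm (φ.smulRight u) a
    _ = ∑ g : G, φ (ρ g⁻¹ a) • ρ g u := by simp [Representation.norm, LinearMap.sum_apply]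
    _ = ∑ g : G, φ (ρ g a) • ρ g⁻¹ u :=
      Fintype.sum_equiv (Equiv.inv G) _ _ fun g ↦ by simp

theorem trace_norm_linHom (X : Module.End k V) :
    LinearMap.trace k V ((ρ.linHom ρ).norm X) = Fintype.card G * LinearMap.trace k V X := by
  have trace_conj (g : G) : LinearMap.trace k V (ρ.linHom ρ g X) = LinearMap.trace k V X :=
    calc LinearMap.trace k V (ρ g * (X * ρ g⁻¹))
      _ = LinearMap.trace k V (X * (ρ g⁻¹ * ρ g)) := by
        rw [LinearMap.trace_mul_comm, mul_assoc]
      _ = LinearMap.trace k V X := by rw [← map_mul, inv_mul_cancel, map_one, mul_one]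
  simp only [Representation.norm, LinearMap.sum_apply, map_sum, trace_conj, Finset.sum_const,
    Finset.card_univ, nsmul_eq_mul]

end ConjugationSum

section Orthogonality

variable {G k V : Type*} [Group G] [Fintype G] [CommRing k] [AddCommGroup V] [Module k V]
  {ρ : Representation k G V}

theorem isIntertwiningMap_norm_linHom (X : Module.End k V) :
    ρ.IsIntertwiningMap ρ ((ρ.linHom ρ).norm X) :=
  (Representation.mem_linHom_invariants_iff_isIntertwining _).mp fun g ↦
    (ρ.linHom ρ).self_norm_apply g X

variable [Module.Free k V] [Module.Finite k V]
  (hρ : Function.Surjective (algebraMap k (ρ.IntertwiningMap ρ)))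
include hρ

theorem finrank_smul_norm_linHom (X : Module.End k V) :
    (Module.finrank k V : k) • (ρ.linHom ρ).norm X =
      (Fintype.card G * LinearMap.trace k V X) • 1 := by
  obtain ⟨c, hc⟩ := hρ <| LinearMap.intertwiningMap_of_isIntertwiningMap ρ ρ
    ((ρ.linHom ρ).norm X) (isIntertwiningMap_norm_linHom X).isIntertwining
  have norm_eq : (ρ.linHom ρ).norm X = c • 1 :=
    congrArg Representation.IntertwiningMap.toLinearMap hc.symm
  rw [← trace_norm_linHom ρ, norm_eq, map_smul, LinearMap.trace_one, smul_smul, smul_eq_mul,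
    mul_comm]

theorem finrank_smul_sum_trace_mul_smul_inv (A : Module.End k V) :
    (Module.finrank k V : k) • ∑ g : G, LinearMap.trace k V (ρ g * A) • ρ g⁻¹ =
      (Fintype.card G : k) • A := by
  induction A using linearMap_induction_smulRight with
  | smulRight φ a =>
    ext u
    have trace_eq (g : G) : LinearMap.trace k V (ρ g * φ.smulRight a) = φ (ρ g a) := by
      have mul_eq : ρ g * φ.smulRight a = φ.smulRight (ρ g a) := by ext; simp
      rw [mul_eq, LinearMap.trace_smulRight]
    calc ((Module.finrank k V : k) •
          ∑ g : G, LinearMap.trace k V (ρ g * φ.smulRight a) • ρ g⁻¹) u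
      _ = (Module.finrank k V : k) • (ρ.linHom ρ).norm (φ.smulRight u) a := by
        simp only [trace_eq, norm_linHom_smulRight_apply, LinearMap.smul_apply,
          LinearMap.sum_apply]
      _ = (Fintype.card G * φ u) • a := by
        rw [← LinearMap.smul_apply, finrank_smul_norm_linHom hρ, LinearMap.trace_smulRight,
          LinearMap.smul_apply, Module.End.one_apply]
      _ = ((Fintype.card G : k) • φ.smulRight a) u := by
        rw [LinearMap.smul_apply, LinearMap.smulRight_apply, smul_smul]
  | add A B hA hB =>
    simp only [mul_add, map_add, add_smul, Finset.sum_add_distrib, smul_add, hA, hB]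

end Orthogonality

theorem sum_trace_mul_smul_mul_inv {G k V : Type*} [Group G] [Fintype G] [Field k]
    [AddCommGroup V] [Module k V] {ρ : Representation k G V}
    (hρ : Function.Surjective (algebraMap k (ρ.IntertwiningMap ρ)))
    (hdim : (Module.finrank k V : k) ≠ 0) (A B : Module.End k V) :
    ∑ g : G, LinearMap.trace k V (ρ g * A) • (B * ρ g⁻¹) =
      (Fintype.card G / Module.finrank k V : k) • (B * A) := by
  have : FiniteDimensional k V :=
    Module.finite_of_finrank_pos (Nat.pos_of_ne_zero fun h ↦ hdim (by simp [h]))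
  have sum_eq : ∑ g : G, LinearMap.trace k V (ρ g * A) • ρ g⁻¹ =
      (Fintype.card G / Module.finrank k V : k) • A := by
    rw [div_eq_inv_mul, mul_smul, eq_inv_smul_iff₀ hdim, finrank_smul_sum_trace_mul_smul_inv hρ]
  simp only [← mul_smul_comm, ← Finset.mul_sum, sum_eq]

theorem formal_codegree_of_selfdual_twist_general {G k V : Type*} [Group G] [Fintype G]
    [Field k] [AddCommGroup V] [Module k V] {ρ : Representation k G V}
    (hρ : Function.Surjective (algebraMap k (ρ.IntertwiningMap ρ)))
    (hdim : (Module.finrank k V : k) ≠ 0) {W : Module.End k V} (hW : W * W = 1) :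
    ∑ g : G, LinearMap.trace k V (ρ g) • ρ g⁻¹ +
        ∑ g : G, LinearMap.trace k V (ρ g * W) • (W * ρ g⁻¹) =
      (2 * Fintype.card G / Module.finrank k V : k) • 1 := by
  have untwisted := sum_trace_mul_smul_mul_inv hρ hdim 1 1
  have twisted := sum_trace_mul_smul_mul_inv hρ hdim W W
  simp only [mul_one, one_mul] at untwisted
  rw [untwisted, twisted, hW, ← add_smul, ← two_mul, mul_div_assoc]

theorem isIrreducible_of_forall_invariant_eq_bot_or_top {G k V : Type*} [Monoid G] [Field k]
    [AddCommGroup V] [Module k V] [Nontrivial V] {ρ : Representation k G V}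
    (h : ∀ p : Submodule k V, (∀ (g : G), ∀ v ∈ p, ρ g v ∈ p) → p = ⊥ ∨ p = ⊤) :
    ρ.IsIrreducible where
  exists_pair_ne :=
    ⟨⊥, ⊤, fun hbt ↦ bot_ne_top (congrArg Subrepresentation.toSubmodule hbt)⟩
  eq_bot_or_eq_top σ :=
    (h σ.toSubmodule σ.apply_mem_toSubmodule).imp
      (fun hσ ↦ Subrepresentation.toSubmodule_injective hσ)
      (fun hσ ↦ Subrepresentation.toSubmodule_injective hσ)

/-- The linear representation underlying an action of `G` by linear isometries, in particular
underlying a unitary representation. -/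
def isometryRepresentation {G k V : Type*} [Monoid G] [CommSemiring k] [SeminormedAddCommGroup V]
    [Module k V] (π : G →* (V ≃ₗᵢ[k] V)) : Representation k G V where
  toFun g := (π g).toLinearEquiv
  map_one' := by rw [map_one]; rfl
  map_mul' g h := by rw [map_mul]; rfl

/-- For an irreducible unitary representation `π` of a finite group `G` on a nonzero
finite-dimensional complex inner product space `V`, an automorphism `τ` of `G`, and a
self-adjoint unitary `W` with `W π(g) W⁻¹ = π(τ g)`, one has
`Σ_g Tr(π g) • π(g)⁻¹ + Σ_g Tr(π g ∘ W) • (W ∘ π(g)⁻¹) = (2|G| / dim V) • id`. -/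
theorem formal_codegree_of_selfdual_twist
    {G : Type} [Group G] [Fintype G]
    {V : Type} [NormedAddCommGroup V] [InnerProductSpace ℂ V]
    [FiniteDimensional ℂ V] [Nontrivial V]
    (π : G →* (V ≃ₗᵢ[ℂ] V))
    (hirr : ∀ p : Submodule ℂ V, (∀ (g : G), ∀ v ∈ p, π g v ∈ p) → p = ⊥ ∨ p = ⊤)
    (τ : G ≃* G)
    (W : V →ₗ[ℂ] V)
    (hWsa : LinearMap.adjoint W = W)
    (hWunit : W ∘ₗ W = LinearMap.id)
    (hWint : ∀ g : G,
      W ∘ₗ ((π g).toLinearEquiv : V →ₗ[ℂ] V) ∘ₗ W = ((π (τ g)).toLinearEquiv : V →ₗ[ℂ] V)) :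
    (∑ g : G, (LinearMap.trace ℂ V ((π g).toLinearEquiv : V →ₗ[ℂ] V)) •
        ((π g⁻¹).toLinearEquiv : V →ₗ[ℂ] V))
      + (∑ g : G, (LinearMap.trace ℂ V (((π g).toLinearEquiv : V →ₗ[ℂ] V) ∘ₗ W)) •
        (W ∘ₗ ((π g⁻¹).toLinearEquiv : V →ₗ[ℂ] V)))
      = ((2 * (Fintype.card G : ℂ)) / (Module.finrank ℂ V : ℂ)) • LinearMap.id := by
  have : (isometryRepresentation π).IsIrreducible :=
    isIrreducible_of_forall_invariant_eq_bot_or_top hirr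
  exact formal_codegree_of_selfdual_twist_general
    (Representation.IsIrreducible.algebraMap_intertwiningMap_bijective_of_isAlgClosed
      (ρ := isometryRepresentation π)).surjective
    (Nat.cast_ne_zero.mpr Module.finrank_pos.ne') hWunit
end

section
/- Let G be a finite abelian group, written additively. For every 2-cocycle ω on G with values in 𝕋 there exists a cohomologous 2-cocycle ω' that is normalized and in addition satisfies ω'(g,h)·ω'(h,g) = 1 and ω'(g,h) = ω'(−g,−h) for all g,h ∈ G. -/
/-- A `𝕋`-valued 2-cocycle on an additive group, modelled as a ℂ-valued function of modulus one
satisfying the cocycle identity. -/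
def IsTCocycle {G : Type} [AddCommGroup G] (ω : G → G → ℂ) : Prop :=
  (∀ g h : G, ‖ω g h‖ = 1) ∧
  (∀ g h k : G, ω g h * ω (g + h) k = ω h k * ω g (h + k))

/-!
Write cocycles additively, with values in a divisible group `A`. The symmetrization
`w g h + w h g` is a symmetric cocycle, so it defines an abelian extension of `G` by `A`; this
splits because `A` is divisible, and halving the resulting cochain makes `w` skew. For a skew
cocycle normalized at the origin, `g ↦ w g (-g)` takes values in the 2-torsion of `A`. On the
2-torsion of `G` it is the homomorphism `g ↦ w g g`, which extends to `G` and is removed by half of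
the extension, whose coboundary is again skew. What remains vanishes at all fixed points of
negation, so it can be absorbed by correcting one element of each pair `{g, -g}`.
-/

section Involution

variable {X M : Type*}

theorem exists_add_involutive_apply_eq [AddZeroClass M] {σ : X → X} (hσ : σ.Involutive) {c : X → M}
    (hc : ∀ x, c (σ x) = c x) (hfix : ∀ x, σ x = x → c x = 0) :
    ∃ τ : X → M, (∀ x, τ x = 0 ∨ τ x = c x) ∧ ∀ x, τ x + τ (σ x) = c x := by
  let : LinearOrder X := IsWellOrder.linearOrder WellOrderingRel
  refine ⟨fun x => if x < σ x then c x else 0, fun x => ?_, fun x => ?_⟩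
  · by_cases hx : x < σ x <;> simp [hx]
  · rcases lt_trichotomy x (σ x) with hx | hx | hx
    · simp [hσ x, hx, hx.not_gt]
    · simp [← hx, hfix x hx.symm]
    · simp [hσ x, hx, hx.not_gt, hc]

end Involution

section Cocycle

variable {G A : Type*} [AddCommGroup A]

/-- The 2-cocycle identity for a function `w : G → G → A`, where `G` acts trivially on `A`. -/
def IsAddCocycle [Add G] (w : G → G → A) : Prop :=
  ∀ g h k, w g h + w (g + h) k = w h k + w g (h + k)

/-- The coboundary of a 1-cochain `μ`, where `G` acts trivially on `A`. -/
def coboundary [Add G] (μ : G → A) (g h : G) : A :=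
  μ g + μ h - μ (g + h)

/-- Two functions of two variables are cohomologous if they differ by a coboundary. -/
def Cohomologous [Add G] (w v : G → G → A) : Prop :=
  ∃ μ : G → A, v = w + coboundary μ

/-- Antisymmetry of a function of two variables; `w g g` is only required to be 2-torsion. -/
def IsSkew (w : G → G → A) : Prop :=
  ∀ g h, w g h + w h g = 0

theorem coboundary_add [Add G] (μ ν : G → A) :
    coboundary (μ + ν) = coboundary μ + coboundary ν := by
  ext g h
  simp only [coboundary, Pi.add_apply]
  abel

theorem Cohomologous.trans [Add G] {u v w : G → G → A} :
    Cohomologous u v → Cohomologous v w → Cohomologous u w := by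
  rintro ⟨μ, rfl⟩ ⟨ν, rfl⟩
  exact ⟨μ + ν, by rw [coboundary_add, add_assoc]⟩

namespace IsAddCocycle

theorem of_cohomologous [AddSemigroup G] {w v : G → G → A} (hw : IsAddCocycle w) :
    Cohomologous w v → IsAddCocycle v := by
  rintro ⟨μ, rfl⟩ g h k
  simp only [Pi.add_apply, coboundary, add_assoc g h k]
  linear_combination (norm := abel) hw g h k

theorem apply_zero_left [AddZeroClass G] {w : G → G → A} (hw : IsAddCocycle w) (g : G) :
    w 0 g = w 0 0 := by
  simpa using (hw 0 0 g).symm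

theorem apply_zero_right [AddZeroClass G] {w : G → G → A} (hw : IsAddCocycle w) (g : G) :
    w g 0 = w 0 0 := by
  simpa using hw g 0 0

theorem apply_neg_left [AddGroup G] {w : G → G → A} (hw : IsAddCocycle w) (g : G) :
    w (-g) g = w g (-g) := by
  simpa [hw.apply_zero_left g, hw.apply_zero_right g] using (hw g (-g) g).symm

theorem symmetrization [AddCommSemigroup G] {w : G → G → A} (hw : IsAddCocycle w) :
    IsAddCocycle fun g h => w g h + w h g := by
  intro g h k
  have hreverse := hw k h g
  rw [add_comm k h, add_comm h g] at hreverse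
  beta_reduce
  linear_combination (norm := abel) hw g h k - hreverse

theorem diag_add [AddCommMonoid G] {w : G → G → A} (hw : IsAddCocycle w) (g : G) {h : G}
    (hh : h + h = 0) :
    w (g + h) (g + h) + (w g h + w h g) = w g g + w h h + w 0 0 := by
  have h₁ := hw g h (g + h)
  have h₂ := hw h h g
  rw [add_left_comm h g h, hh, add_zero] at h₁
  rw [hh, hw.apply_zero_left, add_comm h g] at h₂
  linear_combination (norm := abel) h₁ - h₂

theorem apply_neg_neg [AddCommGroup G] {w : G → G → A} (hw : IsAddCocycle w) (hskew : IsSkew w)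
    (hneg : ∀ g, w g (-g) = 0) (g h : G) : w (-g) (-h) = w g h := by
  have hzero : w g 0 = 0 := by simpa [hw.apply_zero_right g] using hneg 0
  have h₁ : w g h + w (g + h) (-h) = 0 := by simpa [hneg, hzero] using hw g h (-h)
  have h₂ : w (g + h) (-h) = w (-h) (-g) := by
    simpa [hneg, ← neg_add_rev] using hw (g + h) (-h) (-g)
  linear_combination (norm := abel) hskew (-g) (-h) - h₁ + h₂

/-- The abelian extension of `G` by `A` with symmetric factor set `w`: the set `A × G` with addition
twisted by `w`. As `w` need not be normalized, its zero is `(-w 0 0, 0)`. -/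
@[ext]
structure Extension [Add G] {w : G → G → A} (hw : IsAddCocycle w)
    (hsymm : ∀ g h, w g h = w h g) where
  fiber : A
  base : G

namespace Extension

variable [AddCommGroup G] {w : G → G → A} {hw : IsAddCocycle w} {hsymm : ∀ g h, w g h = w h g}

instance : Add (Extension hw hsymm) :=
  ⟨fun x y => ⟨x.fiber + y.fiber + w x.base y.base, x.base + y.base⟩⟩

instance : Zero (Extension hw hsymm) :=
  ⟨⟨-w 0 0, 0⟩⟩

instance : Neg (Extension hw hsymm) :=
  ⟨fun x => ⟨-x.fiber - w x.base (-x.base) - w 0 0, -x.base⟩⟩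

theorem mk_add_mk (a b : A) (g h : G) :
    (⟨a, g⟩ + ⟨b, h⟩ : Extension hw hsymm) = ⟨a + b + w g h, g + h⟩ :=
  rfl

theorem zero_def : (0 : Extension hw hsymm) = ⟨-w 0 0, 0⟩ :=
  rfl

theorem neg_mk (a : A) (g : G) :
    (-⟨a, g⟩ : Extension hw hsymm) = ⟨-a - w g (-g) - w 0 0, -g⟩ :=
  rfl

instance : AddCommGroup (Extension hw hsymm) where
  __ := AddGroup.ofLeftAxioms (G := Extension hw hsymm)
    (by
      rintro ⟨a, g⟩ ⟨b, h⟩ ⟨c, k⟩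
      simp only [mk_add_mk, add_assoc g h k, mk.injEq, and_true]
      linear_combination (norm := abel) hw g h k)
    (by
      rintro ⟨a, g⟩
      simp only [zero_def, mk_add_mk, hw.apply_zero_left, zero_add, mk.injEq, and_true]
      abel)
    (by
      rintro ⟨a, g⟩
      simp only [zero_def, neg_mk, mk_add_mk, hw.apply_neg_left, neg_add_cancel, mk.injEq,
        and_true]
      abel)
  add_comm := by
    rintro ⟨a, g⟩ ⟨b, h⟩
    simp only [mk_add_mk, add_comm a b, add_comm g h, hsymm g h]

/-- The inclusion of the kernel `A` of the projection `Extension hw hsymm → G`. -/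
def inl : A →+ Extension hw hsymm :=
  AddMonoidHom.mk' (fun a => ⟨a - w 0 0, 0⟩) fun a b => by
    simp only [mk_add_mk, add_zero, mk.injEq, and_true]
    abel

theorem inl_apply (a : A) : (inl a : Extension hw hsymm) = ⟨a - w 0 0, 0⟩ :=
  rfl

theorem inl_injective : Function.Injective (inl : A →+ Extension hw hsymm) := fun _ _ hab =>
  sub_left_injective (congrArg fiber hab)

theorem mk_zero_add_mk_zero (g h : G) :
    (⟨0, g⟩ + ⟨0, h⟩ : Extension hw hsymm) = inl (w g h) + ⟨0, g + h⟩ := by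
  simp [mk_add_mk, inl_apply, hw.apply_zero_left]

end Extension

theorem cohomologous_zero_of_symmetric [DivisibleBy A ℤ] [AddCommGroup G] {w : G → G → A}
    (hw : IsAddCocycle w) (hsymm : ∀ g h, w g h = w h g) : Cohomologous w 0 := by
  obtain ⟨F, hF⟩ := (Module.Baer.of_divisible A).extension_property_addMonoidHom
    (Extension.inl : A →+ Extension hw hsymm) Extension.inl_injective (AddMonoidHom.id A)
  refine ⟨fun g => -F ⟨0, g⟩, ?_⟩
  ext g h
  have hFw : F (Extension.inl (w g h)) = w g h := DFunLike.congr_fun hF (w g h)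
  have hadd := congrArg F (Extension.mk_zero_add_mk_zero (hw := hw) (hsymm := hsymm) g h)
  rw [map_add, map_add, hFw] at hadd
  simp only [Pi.zero_apply, Pi.add_apply, coboundary]
  linear_combination (norm := abel) hadd

end IsAddCocycle

theorem exists_add_self_eq [DivisibleBy A ℤ] (a : A) : ∃ b : A, b + b = a :=
  ⟨DivisibleBy.div a (2 : ℤ), by rw [← two_zsmul, DivisibleBy.div_cancel a two_ne_zero]⟩

theorem IsAddCocycle.exists_isSkew [DivisibleBy A ℤ] [AddCommGroup G] {w : G → G → A}
    (hw : IsAddCocycle w) : ∃ v, Cohomologous w v ∧ IsSkew v := by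
  obtain ⟨ν, hν⟩ := hw.symmetrization.cohomologous_zero_of_symmetric fun _ _ => add_comm _ _
  choose μ hμ using fun g => exists_add_self_eq (ν g)
  refine ⟨_, ⟨μ, rfl⟩, fun g h => ?_⟩
  have hsum : 0 = w g h + w h g + (ν g + ν h - ν (g + h)) := congrFun₂ hν g h
  simp only [Pi.add_apply, coboundary, add_comm h g]
  rw [hsum, ← hμ, ← hμ, ← hμ]
  abel

namespace IsSkew

theorem add_coboundary [AddCommMonoid G] {w : G → G → A} (hw : IsSkew w) {τ : G → A} (χ : G →+ A)
    (hτ : ∀ g, τ g + τ g = χ g) : IsSkew (w + coboundary τ) := by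
  intro g h
  have hχ := map_add χ g h
  simp only [← hτ] at hχ
  simp only [Pi.add_apply, coboundary, add_comm h g]
  linear_combination (norm := abel) hw g h - hχ

theorem exists_apply_zero_zero_eq_zero [AddCommMonoid G] {w : G → G → A} (hw : IsSkew w) :
    ∃ v, Cohomologous w v ∧ IsSkew v ∧ v 0 0 = 0 := by
  refine ⟨_, ⟨fun _ => -w 0 0, rfl⟩, hw.add_coboundary 0 fun _ => ?_, ?_⟩
  · rw [AddMonoidHom.zero_apply, ← neg_add, hw, neg_zero]
  · simp [coboundary]

theorem exists_diag_eq_zero [DivisibleBy A ℤ] [AddCommGroup G] {w : G → G → A}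
    (hskew : IsSkew w) (hw : IsAddCocycle w) (hzero : w 0 0 = 0) :
    ∃ v, Cohomologous w v ∧ IsSkew v ∧ ∀ g, g + g = 0 → v g g = 0 := by
  have htwo (g : AddSubgroup.torsionBy G 2) : (g + g : G) = 0 := by
    rw [← two_zsmul]
    exact g.2
  let diag : AddSubgroup.torsionBy G 2 →+ A := AddMonoidHom.mk' (fun g => w g g) fun g h => by
    simpa [hskew g h, hzero] using hw.diag_add g (htwo h)
  obtain ⟨χ, hχ⟩ := (Module.Baer.of_divisible A).extension_property_addMonoidHom
    (AddSubgroup.torsionBy G 2).subtype (AddSubgroup.subtype_injective _) diag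
  have hχ_diag (g : G) (hg : g + g = 0) : χ g = w g g :=
    DFunLike.congr_fun hχ ⟨g, by rwa [← two_zsmul] at hg⟩
  choose r hr using fun g => exists_add_self_eq (-χ g)
  have hτ (g : G) : (r g - r 0) + (r g - r 0) = (-χ) g := by
    rw [sub_add_sub_comm, hr, hr, map_zero, neg_zero, sub_zero, AddMonoidHom.neg_apply]
  refine ⟨_, ⟨fun g => r g - r 0, rfl⟩, hskew.add_coboundary (-χ) hτ, fun g hg => ?_⟩
  simp only [Pi.add_apply, coboundary, hg, sub_self, sub_zero, hτ]
  rw [AddMonoidHom.neg_apply, hχ_diag g hg, add_neg_cancel]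

theorem exists_apply_neg_eq_zero [AddCommGroup G] {w : G → G → A}
    (hskew : IsSkew w) (hw : IsAddCocycle w) (hdiag : ∀ g, g + g = 0 → w g g = 0) :
    ∃ v, Cohomologous w v ∧ IsSkew v ∧ ∀ g, v g (-g) = 0 := by
  obtain ⟨τ, hτ_or, hτ_add⟩ := exists_add_involutive_apply_eq (neg_involutive (G := G))
    (c := fun g => -w g (-g)) (fun g => by rw [neg_neg, hw.apply_neg_left]) fun g hg => by
      rw [hg, hdiag g (neg_eq_iff_add_eq_zero.1 hg), neg_zero]
  have hτ_two (g : G) : τ g + τ g = 0 := by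
    rcases hτ_or g with h | h
    · rw [h, add_zero]
    · rw [h, ← neg_add, neg_eq_zero]
      simpa only [hw.apply_neg_left] using hskew g (-g)
  have hτ_zero : τ 0 = 0 := by
    simpa [hdiag 0 (add_zero 0)] using hτ_or 0
  refine ⟨_, ⟨τ, rfl⟩, hskew.add_coboundary 0 hτ_two, fun g => ?_⟩
  simp only [Pi.add_apply, coboundary, hτ_add, add_neg_cancel, hτ_zero, sub_zero]

end IsSkew

theorem IsAddCocycle.exists_isSkew_apply_neg_eq_zero [DivisibleBy A ℤ] [AddCommGroup G]
    {w : G → G → A} (hw : IsAddCocycle w) :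
    ∃ v, Cohomologous w v ∧ IsSkew v ∧ ∀ g, v g (-g) = 0 := by
  obtain ⟨v₁, hwv₁, hskew₁⟩ := hw.exists_isSkew
  obtain ⟨v₂, hv₁v₂, hskew₂, hzero⟩ := hskew₁.exists_apply_zero_zero_eq_zero
  have hwv₂ := hwv₁.trans hv₁v₂
  obtain ⟨v₃, hv₂v₃, hskew₃, hdiag⟩ :=
    hskew₂.exists_diag_eq_zero (hw.of_cohomologous hwv₂) hzero
  have hwv₃ := hwv₂.trans hv₂v₃
  obtain ⟨v, hv₃v, hskew, hneg⟩ :=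
    hskew₃.exists_apply_neg_eq_zero (hw.of_cohomologous hwv₃) hdiag
  exact ⟨v, hwv₃.trans hv₃v, hskew, hneg⟩

end Cocycle

noncomputable instance : DivisibleBy (Additive Circle) ℤ :=
  Function.Surjective.divisibleBy Circle.expHom
    (fun z => Circle.exp_surjective z.toMul) (fun x n => map_zsmul Circle.expHom n x)

section Circle

variable {G : Type} [AddCommGroup G]

theorem IsTCocycle.exists_circle_lift {ω : G → G → ℂ} (hω : IsTCocycle ω) :
    ∃ w : G → G → Additive Circle, IsAddCocycle w ∧ ∀ g h, ((w g h).toMul : ℂ) = ω g h :=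
  ⟨fun g h => .ofMul ⟨ω g h, mem_sphere_zero_iff_norm.2 (hω.1 g h)⟩,
    fun g h k => Additive.toMul.injective (Circle.ext (hω.2 g h k)), fun _ _ => rfl⟩

theorem IsAddCocycle.isTCocycle_coe {w : G → G → Additive Circle} (hw : IsAddCocycle w) :
    IsTCocycle fun g h => ((w g h).toMul : ℂ) :=
  ⟨fun _ _ => Circle.norm_coe _, fun g h k => congrArg (fun z => (z.toMul : ℂ)) (hw g h k)⟩

theorem exists_normalized_antisymmetric_cocycle_general (ω : G → G → ℂ) (hω : IsTCocycle ω) :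
    ∃ ω' : G → G → ℂ, IsTCocycle ω' ∧
      (∃ μ : G → ℂ, (∀ g : G, ‖μ g‖ = 1) ∧
        ∀ g h : G, ω' g h = ω g h * μ g * μ h * (μ (g + h))⁻¹) ∧
      (∀ g : G, ω' g 0 = 1) ∧ (∀ g : G, ω' 0 g = 1) ∧ (∀ g : G, ω' g (-g) = 1) ∧
      (∀ g h : G, ω' g h * ω' h g = 1) ∧
      (∀ g h : G, ω' g h = ω' (-g) (-h)) := by
  obtain ⟨w, hw, hwω⟩ := hω.exists_circle_lift
  obtain ⟨v, hwv, hskew, hneg⟩ := hw.exists_isSkew_apply_neg_eq_zero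
  have hv : IsAddCocycle v := hw.of_cohomologous hwv
  have hzero : v 0 0 = 0 := by simpa using hneg 0
  obtain ⟨μ, hμ⟩ := hwv
  refine ⟨fun g h => ((v g h).toMul : ℂ), hv.isTCocycle_coe,
    ⟨fun g => ((μ g).toMul : ℂ), fun g => Circle.norm_coe _, fun g h => ?_⟩,
    fun g => ?_, fun g => ?_, fun g => ?_, fun g h => ?_, fun g h => ?_⟩
  · simp [hμ, coboundary, hwω, div_eq_mul_inv, mul_assoc]
  · simp [hv.apply_zero_right g, hzero]
  · simp [hv.apply_zero_left g, hzero]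
  · simp [hneg g]
  · exact congrArg (fun z => (z.toMul : ℂ)) (hskew g h)
  · exact congrArg (fun z => (z.toMul : ℂ)) (hv.apply_neg_neg hskew hneg g h).symm

end Circle

/-- Every `𝕋`-valued 2-cocycle on a finite abelian group is cohomologous (via a `𝕋`-valued
function `μ`) to a normalized cocycle `ω'` satisfying in addition
`ω'(g,h)·ω'(h,g) = 1` and `ω'(g,h) = ω'(−g,−h)`. -/
theorem exists_normalized_antisymmetric_cocycle
    {G : Type} [AddCommGroup G] [Fintype G]
    (ω : G → G → ℂ) (hω : IsTCocycle ω) :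
    ∃ ω' : G → G → ℂ, IsTCocycle ω' ∧
      (∃ μ : G → ℂ, (∀ g : G, ‖μ g‖ = 1) ∧
        ∀ g h : G, ω' g h = ω g h * μ g * μ h * (μ (g + h))⁻¹) ∧
      (∀ g : G, ω' g 0 = 1) ∧ (∀ g : G, ω' 0 g = 1) ∧ (∀ g : G, ω' g (-g) = 1) ∧
      (∀ g h : G, ω' g h * ω' h g = 1) ∧
      (∀ g h : G, ω' g h = ω' (-g) (-h)) :=
  exists_normalized_antisymmetric_cocycle_general ω hω
end

section
/- Let G be a finite abelian group, and let ε : G×G → {1,−1}, η : G → ℂ, A : G×G×G → ℂ satisfy equations (1), (2) and (8) of the polynomial equations. Then for all g,h,k ∈ G: A_g(h,k) = A_{g+h+k}(h,k)·ε_h(g+k)·ε_k(g+h)·ε_{h+k}(g)·η_{g+h}·conj(η_{g+k}). -/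
open scoped BigOperators

/-- `d = (n + √(n²+4))/2` where `n` is the cardinality of `G`. -/
noncomputable def dR (G : Type) [Fintype G] : ℝ :=
  ((Fintype.card G : ℝ) + Real.sqrt ((Fintype.card G : ℝ) ^ 2 + 4)) / 2

/-- The complex number `d`. -/
noncomputable def dC (G : Type) [Fintype G] : ℂ := ((dR G : ℝ) : ℂ)

/-!
Shift first by `h` with the first half of (8), then by `k` with the second half, applied at `g + h`.
Since `η` is invariant under translation by `2h`, the two phases only involve `η` at `g`, `g + h`,
`g + k` and `g + h + k`. By unimodularity the factors at `g` and `g + h + k` cancel, leaving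
`η_{g+k}² · conj(η_{g+h})²`, which for cube roots of unity is `conj(η_{g+k}) · η_{g+h}`.
The signs `ε_h(g)` and `ε_k(g+2h)` combine to `ε_{h+k}(g)` by (1).
-/

theorem star_eq_pow_of_mem_unitary_of_pow_succ_eq_one {R : Type*} [Monoid R] [StarMul R]
    {u : R} {n : ℕ} (hu : u ∈ unitary R) (hun : u ^ (n + 1) = 1) : star u = u ^ n :=
  calc
    star u = star u * u ^ (n + 1) := by rw [hun, mul_one]
    _ = star u * u * u ^ n := by rw [pow_succ', mul_assoc]
    _ = u ^ n := by rw [Unitary.star_mul_self_of_mem hu, one_mul]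

theorem mul_star_mul_mul_star_eq_sq_mul_star_sq {R : Type*} [CommMonoid R] [StarMul R]
    {x w : R} (hx : x ∈ unitary R) (hw : w ∈ unitary R) (y z : R) :
    (x * y * star z * star w) * (star z * star x * w * y) = y ^ 2 * star z ^ 2 :=
  calc
    (x * y * star z * star w) * (star z * star x * w * y)
        = (x * star x) * (w * star w) * ((y * y) * (star z * star z)) := by ac_rfl
    _ = y ^ 2 * star z ^ 2 := by
      rw [Unitary.mul_star_self_of_mem hx, Unitary.mul_star_self_of_mem hw, one_mul, one_mul,
        ← sq, ← sq]

theorem mem_unitary_of_pow_eq_one {𝕜 : Type*} [RCLike 𝕜] {z : 𝕜} {n : ℕ} (hz : z ^ n = 1)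
    (hn : n ≠ 0) : z ∈ unitary 𝕜 := by
  have norm_eq_one : ‖z‖ = 1 :=
    (isOfFinOrder_iff_pow_eq_one.mpr ⟨n, Nat.pos_of_ne_zero hn, hz⟩).norm_eq_one
  rw [Unitary.mem_iff_self_mul_star, ← starRingEnd_apply, RCLike.mul_conj,
    norm_eq_one, RCLike.ofReal_one, one_pow]

section Shift

variable {G R : Type*} [AddCommSemigroup G] [CommMonoid R] [StarMul R]
  {ε : G → G → R} {η : G → R} {A : G → G → G → R}

theorem A_shift_by_h_add_k_of_mem_unitary
    (h1 : ∀ g h k : G, ε (h + k) g = ε h g * ε k (g + h + h))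
    (h2 : ∀ g h : G, η (g + h + h) = η g)
    (hη : ∀ g : G, η g ∈ unitary R)
    (h8a : ∀ g h k : G,
      A g h k = η g * η (g + k) * star (η (g + h)) * star (η (g + h + k)) *
        ε h g * ε h (g + k) * A (g + h) h k)
    (h8b : ∀ g h k : G,
      A g h k = star (η g) * star (η (g + h)) * η (g + k) * η (g + h + k) *
        ε k g * ε k (g + h) * A (g + k) h k)
    (g h k : G) :
    A g h k = A (g + h + k) h k * ε h (g + k) * ε k (g + h) * ε (h + k) g *
      (η (g + k) ^ 2 * star (η (g + h)) ^ 2) := by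
  have shift_k : A (g + h) h k = star (η (g + h)) * star (η g) * η (g + h + k) * η (g + k) *
      ε k (g + h) * ε k (g + h + h) * A (g + h + k) h k := by
    have hη_shift : η (g + h + h + k) = η (g + k) := by
      rw [add_right_comm _ h k, add_right_comm _ h k, h2]
    rw [h8b (g + h) h k, h2, hη_shift]
  calc
    A g h k
        = (η g * η (g + k) * star (η (g + h)) * star (η (g + h + k))) *
            (star (η (g + h)) * star (η g) * η (g + h + k) * η (g + k)) *
            (A (g + h + k) h k * ε h (g + k) * ε k (g + h) * (ε h g * ε k (g + h + h))) := by
          rw [h8a g h k, shift_k]; ac_rfl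
    _ = A (g + h + k) h k * ε h (g + k) * ε k (g + h) * ε (h + k) g *
          (η (g + k) ^ 2 * star (η (g + h)) ^ 2) := by
          rw [mul_star_mul_mul_star_eq_sq_mul_star_sq (hη g) (hη (g + h + k)), ← h1, mul_comm]

theorem A_shift_by_h_add_k_general
    (h1 : ∀ g h k : G, ε (h + k) g = ε h g * ε k (g + h + h))
    (h2 : ∀ g h : G, η (g + h + h) = η g)
    (hη : ∀ g : G, η g ∈ unitary R)
    (h2' : ∀ g : G, η g ^ 3 = 1)
    (h8a : ∀ g h k : G,
      A g h k = η g * η (g + k) * star (η (g + h)) * star (η (g + h + k)) *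
        ε h g * ε h (g + k) * A (g + h) h k)
    (h8b : ∀ g h k : G,
      A g h k = star (η g) * star (η (g + h)) * η (g + k) * η (g + h + k) *
        ε k g * ε k (g + h) * A (g + k) h k)
    (g h k : G) :
    A g h k = A (g + h + k) h k * ε h (g + k) * ε k (g + h) * ε (h + k) g *
      η (g + h) * star (η (g + k)) := by
  have star_eq_sq (x : G) : star (η x) = η x ^ 2 :=
    star_eq_pow_of_mem_unitary_of_pow_succ_eq_one (hη x) (h2' x)
  have star_sq_eq : star (η (g + h)) ^ 2 = η (g + h) := by
    rw [← star_pow, ← star_eq_sq, star_star]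
  rw [A_shift_by_h_add_k_of_mem_unitary h1 h2 hη h8a h8b, star_sq_eq, ← star_eq_sq,
    mul_comm (star _), ← mul_assoc]

end Shift

/-- If `(ε, η, A)` satisfies equations (1), (2) and (8) of the polynomial equations,
then `A_g(h,k) = A_{g+h+k}(h,k)·ε_h(g+k)·ε_k(g+h)·ε_{h+k}(g)·η_{g+h}·conj(η_{g+k})`. -/
theorem A_shift_by_h_add_k
    {G : Type} [AddCommGroup G] [Fintype G]
    (ε : G → G → ℂ) (η : G → ℂ) (A : G → G → G → ℂ)
    (heps : ∀ h g : G, ε h g = 1 ∨ ε h g = -1)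
    (h1 : ∀ g h k : G, ε (h + k) g = ε h g * ε k (g + h + h))
    (h1' : ∀ h : G, ε h 0 = 1)
    (h2 : ∀ g h : G, η (g + h + h) = η g)
    (h2' : ∀ g : G, η g ^ 3 = 1)
    (h8a : ∀ g h k : G,
      A g h k = η g * η (g + k) * (starRingEnd ℂ) (η (g + h)) *
        (starRingEnd ℂ) (η (g + h + k)) * ε h g * ε h (g + k) * A (g + h) h k)
    (h8b : ∀ g h k : G,
      A g h k = (starRingEnd ℂ) (η g) * (starRingEnd ℂ) (η (g + h)) * η (g + k) *
        η (g + h + k) * ε k g * ε k (g + h) * A (g + k) h k) :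
    ∀ g h k : G,
      A g h k = A (g + h + k) h k * ε h (g + k) * ε k (g + h) * ε (h + k) g *
        η (g + h) * (starRingEnd ℂ) (η (g + k)) :=
  A_shift_by_h_add_k_general h1 h2
    (fun g ↦ mem_unitary_of_pow_eq_one (h2' g) three_ne_zero) h2' h8a h8b
end

section
/- Let G be a finite abelian group of order n with d = (n+√(n²+4))/2, and let (ε,η,A) satisfy equations (1)–(8) of the polynomial equations. Then for all g,p,q,x ∈ G: Σ_{l∈G} A_{g−p+x}(−x,l+p)·A_{g−q}(x,l+q) = δ_{p−q+x,0}·conj(η_{g+q})·ε_x(g−p−x) − (δ_{x,0}/d)·η_{g+p}·η_{g+q}. -/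
open scoped BigOperators
open Complex

/-- Equation (9) of the polynomial equations, at fixed parameters `g p q x y`. -/
def Eq9At {G : Type} [AddCommGroup G] [Fintype G] [DecidableEq G]
    (ε : G → G → ℂ) (η : G → ℂ) (A : G → G → G → ℂ) (g p q x y : G) : Prop :=
  ∑ l : G, A g (x + y) l * A (g - p + x) (-x) (l + p) * A (g - q + x + y) (-y) (l + q)
    = η g * η (g + q + x) * η (g + p + q + y) *
        (starRingEnd ℂ) (η (g + p)) * (starRingEnd ℂ) (η (g + x + y)) *
        (starRingEnd ℂ) (η (g + q + x + y)) *
        ε p (g - p + x) * ε (p + x) (g - p + q + y) *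
        ε q (g - q + x + y) * ε (q + y) (g - q + x) *
        A g (p + x) (q + x + y) * A (g - p) (q + y) (p + x + y)
      - (if x = (0 : G) then (1 : ℂ) else 0) * (if y = (0 : G) then (1 : ℂ) else 0) *
        η g * η (g + p) * η (g + q) / dC G

/-- Equations (1)–(8) of the polynomial equations for `(ε, η, A)` on a finite abelian
group `G` (with `ε` taking values in `{1, −1}`). -/
structure PolyEqs1to8 {G : Type} [AddCommGroup G] [Fintype G] [DecidableEq G]
    (ε : G → G → ℂ) (η : G → ℂ) (A : G → G → G → ℂ) : Prop where
  eps_pm : ∀ h g : G, ε h g = 1 ∨ ε h g = -1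
  eq1 : ∀ g h k : G, ε (h + k) g = ε h g * ε k (g + h + h)
  eq1' : ∀ h : G, ε h 0 = 1
  eq2 : ∀ g h : G, η (g + h + h) = η g
  eq2' : ∀ g : G, η g ^ 3 = 1
  eq3 : ∀ g : G, ∑ h : G, A g h 0 = -(starRingEnd ℂ) (η g) / dC G
  eq4 : ∀ g g' k : G,
    ∑ h : G, A g (h - g) k * (starRingEnd ℂ) (A g' (h - g') k)
      = (if g = g' then (1 : ℂ) else 0)
        - (if k = (0 : G) then (1 : ℂ) else 0) * (starRingEnd ℂ) (η g) * η g' / dC G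
  eq5 : ∀ g h p q : G,
    A (g + h + h) p q = ε h g * ε h (g + p) * ε h (g + q) * ε h (g + p + q) * A g p q
  eq6 : ∀ g h k : G, A g k h = (starRingEnd ℂ) (A g h k)
  eq7a : ∀ g h k : G,
    A g h k = η g * ε (-k) (g + h) * ε (-k) (g + k) * ε (-k) (g + h + k) * A g (-k) (h - k)
  eq7b : ∀ g h k : G,
    A g h k = (starRingEnd ℂ) (η g) * ε (-h) (g + h) * ε (-h) (g + k) * ε (-h) (g + h + k) *
      A g (k - h) (-h)
  eq8a : ∀ g h k : G,
    A g h k = η g * η (g + k) * (starRingEnd ℂ) (η (g + h)) * (starRingEnd ℂ) (η (g + h + k)) *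
      ε h g * ε h (g + k) * A (g + h) h k
  eq8b : ∀ g h k : G,
    A g h k = (starRingEnd ℂ) (η g) * (starRingEnd ℂ) (η (g + h)) * η (g + k) * η (g + h + k) *
      ε k g * ε k (g + h) * A (g + k) h k

/-!
Equation (7) moves `-x` out of the first index of `A_{g+x}(-x, k)` at the cost of three signs, and
the translation rule (5) from `g - x` to `g + x` cancels all three. So `A_{g+x}(-x, k)` is a
multiple of `A_{g-x}(k+x, x)`, and after the symmetry (6) the sum is an inner product of two
columns of `A`, given by (4). Below, `c` stands for `1/d`.
-/

section Orthogonality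

open scoped ComplexConjugate

theorem conj_sq_eq_self_of_pow_three_eq_one {z : ℂ} (hz : z ^ 3 = 1) : conj z ^ 2 = z := by
  have norm_z : ‖z‖ = 1 := norm_eq_one_of_pow_eq_one hz three_ne_zero
  rw [← inv_eq_conj norm_z, inv_pow]
  exact inv_eq_of_mul_eq_one_right (by rw [← pow_succ, hz])

theorem cocycle_zero_eq_one {M N : Type*} [AddMonoid M] [Monoid N] {ε : M → M → N}
    (cocycle : ∀ g h k, ε (h + k) g = ε h g * ε k (g + h + h))
    (eps_sq : ∀ h g, ε h g ^ 2 = 1) (g : M) : ε 0 g = 1 := by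
  have idempotent : ε 0 g = ε 0 g ^ 2 := by
    simpa only [add_zero, sq] using cocycle g 0 0
  rw [idempotent, eps_sq]

variable {G R : Type*} [AddCommGroup G]

theorem apply_sub_eq_apply_add_of_periodic {α : Type*} {f : G → α}
    (hf : ∀ g h, f (g + h + h) = f g) (g h : G) : f (g - h) = f (g + h) := by
  rw [← hf (g - h) h, sub_add_cancel]

variable [CommRing R] [StarRing R] {ε : G → G → R} {η : G → R} {A : G → G → G → R}

theorem apply_add_neg_eq_mul_apply_sub
    (eps_sq : ∀ h g, ε h g ^ 2 = 1)
    (translate : ∀ g h p q, A (g + h + h) p q =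
      ε h g * ε h (g + p) * ε h (g + q) * ε h (g + p + q) * A g p q)
    (rotate : ∀ g h k, A g h k =
      conj (η g) * ε (-h) (g + h) * ε (-h) (g + k) * ε (-h) (g + h + k) * A g (k - h) (-h))
    (g x k : G) :
    A (g + x) (-x) k = conj (η (g + x)) * ε x (g - x) * A (g - x) (k + x) x := by
  have rotated : A (g + x) (-x) k =
      conj (η (g + x)) * ε x g * ε x (g + x + k) * ε x (g + k) * A (g + x) (k + x) x := by
    simpa only [neg_neg, sub_neg_eq_add, add_neg_cancel_right] using rotate (g + x) (-x) k
  have translated : A (g + x) (k + x) x =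
      ε x (g - x) * ε x (g + k) * ε x g * ε x (g + x + k) * A (g - x) (k + x) x := by
    have h := translate (g - x) x (k + x) x
    rwa [sub_add_cancel, show g - x + (k + x) = g + k by abel,
      show g + k + x = g + x + k by abel] at h
  calc
    A (g + x) (-x) k
      = conj (η (g + x)) * ε x (g - x) * A (g - x) (k + x) x *
          (ε x g ^ 2 * ε x (g + x + k) ^ 2 * ε x (g + k) ^ 2) := by
        rw [rotated, translated]; ring
    _ = conj (η (g + x)) * ε x (g - x) * A (g - x) (k + x) x := by
        simp only [eps_sq, mul_one]

variable [Fintype G] [DecidableEq G] {c : R}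

theorem sum_apply_mul_apply_swap
    (orthogonal : ∀ g g' k, ∑ h, A g (h - g) k * conj (A g' (h - g') k) =
      (if g = g' then 1 else 0) - (if k = 0 then 1 else 0) * conj (η g) * η g' * c)
    (hermitian : ∀ g h k, A g k h = conj (A g h k))
    (g p q x : G) :
    ∑ l, A (g - p) (l + p) x * A (g - q) x (l + q) =
      (if p = q then 1 else 0) - (if x = 0 then 1 else 0) * conj (η (g - p)) * η (g - q) * c := by
  have shifted := orthogonal (g - p) (g - q) x
  rw [← Equiv.sum_comp (Equiv.addRight g)] at shifted
  simpa only [Equiv.coe_addRight, ← hermitian, sub_right_inj,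
    show ∀ l r : G, l + g - (g - r) = l + r by intros; abel] using shifted

theorem sum_AA_eq_general
    (eps_sq : ∀ h g, ε h g ^ 2 = 1)
    (eps_zero : ∀ g, ε 0 g = 1)
    (eta_periodic : ∀ g h, η (g + h + h) = η g)
    (conj_eta_sq : ∀ g, conj (η g) ^ 2 = η g)
    (orthogonal : ∀ g g' k, ∑ h, A g (h - g) k * conj (A g' (h - g') k) =
      (if g = g' then 1 else 0) - (if k = 0 then 1 else 0) * conj (η g) * η g' * c)
    (translate : ∀ g h p q, A (g + h + h) p q =
      ε h g * ε h (g + p) * ε h (g + q) * ε h (g + p + q) * A g p q)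
    (hermitian : ∀ g h k, A g k h = conj (A g h k))
    (rotate : ∀ g h k, A g h k =
      conj (η g) * ε (-h) (g + h) * ε (-h) (g + k) * ε (-h) (g + h + k) * A g (k - h) (-h))
    (g p q x : G) :
    ∑ l, A (g - p + x) (-x) (l + p) * A (g - q) x (l + q) =
      (if p - q + x = 0 then 1 else 0) * conj (η (g + q)) * ε x (g - p - x) -
        (if x = 0 then 1 else 0) * c * η (g + p) * η (g + q) := by
  have eta_sub := apply_sub_eq_apply_add_of_periodic eta_periodic
  have diagonal_term : conj (η (g - p + x)) * (if p + x = q then 1 else 0) =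
      (if p + x = q then 1 else 0) * conj (η (g + q)) := by
    split_ifs with hq
    · rw [← eta_sub (g - p), sub_sub, hq, eta_sub, mul_comm]
    · rw [mul_zero, zero_mul]
  have correction_term : (if x = 0 then 1 else 0) *
      (conj (η (g - p + x)) * ε x (g - p - x) * conj (η (g - (p + x)))) =
        (if x = 0 then 1 else 0) * η (g + p) := by
    split_ifs with hx
    · rw [hx, add_zero, add_zero, eps_zero, mul_one, ← sq, conj_eta_sq, eta_sub]
    · rw [zero_mul, zero_mul]
  calc
    ∑ l, A (g - p + x) (-x) (l + p) * A (g - q) x (l + q)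
      = conj (η (g - p + x)) * ε x (g - p - x) *
          ∑ l, A (g - (p + x)) (l + (p + x)) x * A (g - q) x (l + q) := by
        simp only [apply_add_neg_eq_mul_apply_sub eps_sq translate rotate, Finset.mul_sum,
          mul_assoc, sub_sub, add_assoc]
    _ = conj (η (g - p + x)) * ε x (g - p - x) * ((if p + x = q then 1 else 0) -
          (if x = 0 then 1 else 0) * conj (η (g - (p + x))) * η (g - q) * c) := by
        rw [sum_apply_mul_apply_swap orthogonal hermitian]
    _ = (if p + x = q then 1 else 0) * conj (η (g + q)) * ε x (g - p - x) -
          (if x = 0 then 1 else 0) * c * η (g + p) * η (g + q) := by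
        rw [eta_sub g q]
        linear_combination ε x (g - p - x) * diagonal_term - η (g + q) * c * correction_term
    _ = (if p - q + x = 0 then 1 else 0) * conj (η (g + q)) * ε x (g - p - x) -
          (if x = 0 then 1 else 0) * c * η (g + p) * η (g + q) := by
        simp only [sub_add_eq_add_sub, sub_eq_zero]

end Orthogonality

/-- Lemma (O3): for a triple satisfying equations (1)–(8) of the polynomial equations,
`Σ_l A_{g−p+x}(−x,l+p)·A_{g−q}(x,l+q) = δ_{p−q+x,0}·conj(η_{g+q})·ε_x(g−p−x) − (δ_{x,0}/d)·η_{g+p}·η_{g+q}`. -/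
theorem sum_AA_eq
    {G : Type} [AddCommGroup G] [Fintype G] [DecidableEq G]
    (ε : G → G → ℂ) (η : G → ℂ) (A : G → G → G → ℂ)
    (hsol : PolyEqs1to8 ε η A) :
    ∀ g p q x : G,
      ∑ l : G, A (g - p + x) (-x) (l + p) * A (g - q) x (l + q)
        = (if p - q + x = (0 : G) then (1 : ℂ) else 0) * (starRingEnd ℂ) (η (g + q)) *
            ε x (g - p - x)
          - (if x = (0 : G) then (1 : ℂ) else 0) / dC G * η (g + p) * η (g + q) := by
  have eps_sq (h g : G) : ε h g ^ 2 = 1 := sq_eq_one_iff.mpr (hsol.eps_pm h g)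
  simpa only [div_eq_mul_inv] using sum_AA_eq_general eps_sq (cocycle_zero_eq_one hsol.eq1 eps_sq)
    hsol.eq2 (fun g => conj_sq_eq_self_of_pow_three_eq_one (hsol.eq2' g))
    (by simpa only [div_eq_mul_inv] using hsol.eq4) hsol.eq5 hsol.eq6 hsol.eq7b
end

section
/- Let G be a finite abelian group of order n with d = (n+√(n²+4))/2, and let (ε,η,A) satisfy equations (1)–(8) of the polynomial equations together with A_g(h,0) = δ_{h,0} − 1/(d−1) for all g,h ∈ G. Then for all g,p,q,x ∈ G, the instance of equation (9) with y = −x holds if and only if A_g(−x,p)·A_g(x,q)·ε_x(g−x)·ε_x(g+p−x) − A_g(p+x,q)·A_g(q−x,p)·ε_x(g+q−x)·ε_x(g+p+q−x) = δ_{p−q+x,0}·ε_x(g+p)/(d−1) − δ_{x,0}/(d−1). -/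
open scoped BigOperators
open Complex

/-!
The `Q`-system condition together with (3) forces `η = 1`, so (8) moves the base point of `A` at
the cost of signs only. For `y = -x` the first factor in the sum of (9) is
`A_g(0,l) = δ_{l,0} - 1/(d-1)`, so the sum splits into its term at `l = 0` and a multiple of a sum
of products of two values of `A`. By (5) and (7), `A_{b+2x}(-x,k)` is `A_b(k+x,x)` up to a sign, and
so (4) evaluates the latter sum. Moving every remaining value of `A` to the base point `g` produces
the same sign on both sides, and cancelling it leaves the simplified relation.
-/

theorem dR_sq (G : Type) [Fintype G] : dR G ^ 2 = Fintype.card G * dR G + 1 := by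
  have h := Real.sq_sqrt (show (0 : ℝ) ≤ (Fintype.card G : ℝ) ^ 2 + 4 by positivity)
  unfold dR
  linear_combination h / 4

theorem one_lt_dR (G : Type) [Fintype G] [Nonempty G] : 1 < dR G := by
  have hcard : (1 : ℝ) ≤ Fintype.card G := mod_cast Fintype.card_pos
  have hsqrt : (2 : ℝ) ≤ √((Fintype.card G : ℝ) ^ 2 + 4) := Real.le_sqrt_of_sq_le (by nlinarith)
  unfold dR
  linarith

theorem dC_sq (G : Type) [Fintype G] : dC G ^ 2 = Fintype.card G * dC G + 1 := by
  unfold dC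
  exact_mod_cast dR_sq G

theorem dC_ne_zero (G : Type) [Fintype G] [Nonempty G] : dC G ≠ 0 :=
  Complex.ofReal_ne_zero.mpr (by linarith [one_lt_dR G])

theorem dC_ne_one (G : Type) [Fintype G] [Nonempty G] : dC G ≠ 1 :=
  Complex.ofReal_ne_one.mpr (one_lt_dR G).ne'

theorem conj_dC (G : Type) [Fintype G] : starRingEnd ℂ (dC G) = dC G :=
  Complex.conj_ofReal _

theorem one_sub_card_div_dC_sub_one (G : Type) [Fintype G] [Nonempty G] :
    1 - Fintype.card G * (1 / (dC G - 1)) = -1 / dC G := by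
  have hd := dC_ne_zero G
  have hd1 := sub_ne_zero.mpr (dC_ne_one G)
  field_simp
  linear_combination dC_sq G

/-- Equation (1): `ε` is a `1`-cocycle of `G`, where `h` acts on functions on `G` through
translation by `2h`, with values of square one. It governs the signs produced by moving the base
point of `A`. -/
structure IsSignCocycle {G M : Type*} [AddCommGroup G] [CommMonoid M] (ε : G → G → M) : Prop where
  mul_self (h g : G) : ε h g * ε h g = 1
  add_left (h k g : G) : ε (h + k) g = ε h g * ε k (g + h + h)

/-- The sign by which `A_{g-k}(h,k)` and `A_g(h,k)` differ, according to (8) with `η = 1`; it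
serves to move the values of `A` in (9) to a common base point. -/
def shiftSign {G M : Type*} [AddCommGroup G] [CommMonoid M] (ε : G → G → M) (k g h : G) : M :=
  ε k (g - k) * ε k (g - k + h)

namespace IsSignCocycle

variable {G M : Type*} [AddCommGroup G] [CommMonoid M] {ε : G → G → M} (hε : IsSignCocycle ε)
include hε

theorem zero_left (g : G) : ε 0 g = 1 := by
  have h := hε.add_left 0 0 g
  rwa [add_zero, add_zero, add_zero, hε.mul_self] at h

theorem neg_left_add (x g : G) : ε (-x) (g + x) = ε x (g - x) := by
  have h := hε.add_left x (-x) (g - x)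
  rw [add_neg_cancel, hε.zero_left, sub_add_cancel] at h
  exact (left_inv_eq_right_inv (hε.mul_self x (g - x)) h.symm).symm

theorem shiftSign_mul_self (k g h : G) : shiftSign ε k g h * shiftSign ε k g h = 1 := by
  rw [shiftSign, mul_mul_mul_comm, hε.mul_self, hε.mul_self, one_mul]

theorem shiftSign_zero (k g : G) : shiftSign ε k g 0 = 1 := by
  rw [shiftSign, add_zero, hε.mul_self]

theorem shiftSign_mul_shiftSign_add (p x g : G) :
    shiftSign ε p g x * shiftSign ε (p + x) g x = ε x (g - p - x) * ε x (g + p) := by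
  have hp : ε (p + x) (g - p) = ε p (g - p) * ε x (g + p) := by
    rw [hε.add_left, sub_add_cancel]
  have hx : ε (p + x) (g - p - x) = ε x (g - p - x) * ε p (g - p + x) := by
    rw [add_comm p x, hε.add_left, sub_add_cancel]
  rw [shiftSign, shiftSign, ← sub_sub, sub_add_cancel, hp, hx]
  calc ε p (g - p) * ε p (g - p + x) *
        (ε x (g - p - x) * ε p (g - p + x) * (ε p (g - p) * ε x (g + p)))
      = ε p (g - p) * ε p (g - p) * (ε p (g - p + x) * ε p (g - p + x)) *
          (ε x (g - p - x) * ε x (g + p)) := by ac_rfl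
    _ = ε x (g - p - x) * ε x (g + p) := by simp only [hε.mul_self, one_mul]

theorem eq9_sign_eq (p q x g : G) :
    ε p (g - p + x) * ε (p + x) (g - p + q - x) * ε q (g - q) * ε (q - x) (g - q + x) *
        shiftSign ε p g (q - x)
      = shiftSign ε p g x * shiftSign ε q g x * (ε x (g + q - x) * ε x (g + p + q - x)) := by
  have hpx : ε (p + x) (g - p + q - x) = ε p (g - p + q - x) * ε x (g + p + q - x) := by
    rw [hε.add_left, show g - p + q - x + p + p = g + p + q - x by abel]
  have hqx : ε (q - x) (g - q + x) = ε q (g - q + x) * ε x (g + q - x) := by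
    rw [sub_eq_add_neg, hε.add_left, show g - q + x + q + q = g + q + x by abel, hε.neg_left_add]
  rw [hpx, hqx, shiftSign, shiftSign, shiftSign, ← add_sub_assoc]
  calc ε p (g - p + x) * (ε p (g - p + q - x) * ε x (g + p + q - x)) * ε q (g - q) *
        (ε q (g - q + x) * ε x (g + q - x)) * (ε p (g - p) * ε p (g - p + q - x))
      = ε p (g - p + q - x) * ε p (g - p + q - x) * (ε p (g - p) * ε p (g - p + x) *
          (ε q (g - q) * ε q (g - q + x)) * (ε x (g + q - x) * ε x (g + p + q - x))) := by ac_rfl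
    _ = _ := by rw [hε.mul_self, one_mul]

end IsSignCocycle

theorem IsSignCocycle.delta_terms_eq {G K : Type*} [AddCommGroup G] [DecidableEq G] [Field K]
    {ε : G → G → K} (hε : IsSignCocycle ε) {d : K} (hd : d ≠ 0) (hd1 : d ≠ 1) (g p q x : G) :
    ε x (g - p - x) * ((if p - q + x = 0 then 1 else 0) - (if x = 0 then 1 else 0) / d) / (d - 1)
        - (if x = 0 then 1 else 0) / d
      = shiftSign ε p g x * shiftSign ε q g x *
          ((if p - q + x = 0 then 1 else 0) * ε x (g + p) / (d - 1)
            - (if x = 0 then 1 else 0) / (d - 1)) := by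
  have hd_sub := sub_ne_zero.mpr hd1
  obtain rfl | hx := eq_or_ne x 0
  · simp only [hε.zero_left, hε.shiftSign_zero, if_true, one_mul, mul_one]
    field_simp
    ring
  · by_cases hq : p - q + x = 0
    · obtain rfl : q = p + x := by rw [eq_comm, ← sub_eq_zero, ← hq]; abel
      rw [hε.shiftSign_mul_shiftSign_add]
      simp only [if_neg hx, if_pos hq, zero_div, sub_zero, mul_one, one_mul]
      linear_combination -(ε x (g - p - x) / (d - 1)) * hε.mul_self x (g + p)
    · simp [hx, hq]

/-- The `Q`-system condition `A_g(h,0) = δ_{h,0} - 1/(d-1)`, which together with (3) forces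
`η = 1`. -/
def QSystemCondition {G : Type} [AddCommGroup G] [Fintype G] [DecidableEq G]
    (A : G → G → G → ℂ) : Prop :=
  ∀ g h : G, A g h 0 = (if h = (0 : G) then (1 : ℂ) else 0) - 1 / (dC G - 1)

namespace PolyEqs1to8

variable {G : Type} [AddCommGroup G] [Fintype G] [DecidableEq G]
  {ε : G → G → ℂ} {η : G → ℂ} {A : G → G → G → ℂ}

theorem isSignCocycle (hsol : PolyEqs1to8 ε η A) : IsSignCocycle ε where
  mul_self h g := mul_self_eq_one_iff.mpr (hsol.eps_pm h g)
  add_left h k g := hsol.eq1 g h k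

theorem eta_eq_one (hsol : PolyEqs1to8 ε η A) (hQ : QSystemCondition A) : η = 1 := by
  funext g
  have hsum : ∑ h, A g h 0 = -1 / dC G := by
    simp [hQ g, ← one_sub_card_div_dC_sub_one G]
  have hconj : starRingEnd ℂ (η g) = 1 := by
    have h := (hsol.eq3 g).symm.trans hsum
    rwa [div_left_inj' (dC_ne_zero G), neg_inj] at h
  simpa using congrArg (starRingEnd ℂ) hconj

theorem A_zero_left (hsol : PolyEqs1to8 ε η A) (hQ : QSystemCondition A) (g l : G) :
    A g 0 l = (if l = 0 then 1 else 0) - 1 / (dC G - 1) := by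
  rw [hsol.eq6, hQ]
  simp [apply_ite, conj_dC]

theorem sum_A_zero_left_mul (hsol : PolyEqs1to8 ε η A) (hQ : QSystemCondition A) (g : G)
    (f : G → ℂ) : ∑ l, A g 0 l * f l = f 0 - (∑ l, f l) / (dC G - 1) := by
  simp only [hsol.A_zero_left hQ, sub_mul, Finset.sum_sub_distrib, Finset.sum_div, ite_mul,
    one_mul, zero_mul, Finset.sum_ite_eq', Finset.mem_univ, if_true, one_div_mul_eq_div]

theorem A_neg_left (hsol : PolyEqs1to8 ε η A) (b x k : G) :
    A (b + x + x) (-x) k = starRingEnd ℂ (η b) * ε x b * A b (k + x) x := by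
  have hsq := hsol.isSignCocycle.mul_self x
  rw [hsol.eq7b, hsol.eq2, neg_neg, sub_neg_eq_add, hsol.eq5, add_neg_cancel_right,
    show b + x + x + k = b + (k + x) + x by abel,
    show b + x + k = b + (k + x) by abel]
  linear_combination (starRingEnd ℂ (η b) * ε x b * A b (k + x) x) *
    (ε x (b + (k + x) + x) ^ 2 * ε x (b + (k + x)) ^ 2 * hsq (b + x)
      + ε x (b + (k + x)) ^ 2 * hsq (b + (k + x) + x) + hsq (b + (k + x)))

theorem sum_A_neg_left_mul_A (hsol : PolyEqs1to8 ε η A) (b c x : G) :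
    ∑ h, A (b + x + x) (-x) (h - b - x) * A c x (h - c)
      = starRingEnd ℂ (η b) * ε x b * ((if b = c then 1 else 0)
        - (if x = 0 then 1 else 0) * starRingEnd ℂ (η b) * η c / dC G) := by
  rw [← hsol.eq4, Finset.mul_sum]
  refine Finset.sum_congr rfl fun h _ => ?_
  rw [hsol.A_neg_left, sub_add_cancel, ← hsol.eq6, mul_assoc]

section EtaOne

variable (hsol : PolyEqs1to8 ε 1 A)
include hsol

theorem A_sub_right (g h k : G) : A (g - k) h k = shiftSign ε k g h * A g h k := by
  rw [hsol.eq8b (g - k), sub_add_cancel]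
  simp [shiftSign]

theorem A_add_neg_left (g x k : G) :
    A (g + x) (-x) k = ε x (g - x) * ε x (g + k - x) * A g (-x) k := by
  rw [hsol.eq8a (g + x), add_neg_cancel_right, add_right_comm g x k]
  simp [hsol.isSignCocycle.neg_left_add]

theorem A_neg_left_mul_A (g p q x : G) :
    A (g - p + x) (-x) p * A (g - q) x q
      = shiftSign ε p g x * shiftSign ε q g x *
        (A g (-x) p * A g x q * ε x (g - x) * ε x (g + p - x)) := by
  have hsign : shiftSign ε p (g + x) (-x) = shiftSign ε p g x := by
    rw [shiftSign, shiftSign, add_sub_right_comm, add_neg_cancel_right, mul_comm]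
  rw [sub_add_eq_add_sub, hsol.A_sub_right, hsol.A_add_neg_left, hsol.A_sub_right, hsign]
  ring

theorem sum_A_neg_left_mul_A_add (g p q x : G) :
    ∑ l, A (g - p + x) (-x) (l + p) * A (g - q) x (l + q)
      = ε x (g - p - x) * ((if p - q + x = 0 then 1 else 0) - (if x = 0 then 1 else 0) / dC G) := by
  have hδ : g - p - x = g - q ↔ p - q + x = 0 := by
    rw [← sub_eq_zero, show g - p - x - (g - q) = -(p - q + x) by abel, neg_eq_zero]
  have h := hsol.sum_A_neg_left_mul_A (g - p - x) (g - q) x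
  rw [← Equiv.sum_comp (Equiv.addRight g)] at h
  simpa [hδ, show ∀ l, l + g - (g - p - x) - x = l + p by intro l; abel,
    show ∀ l, l + g - (g - q) = l + q by intro l; abel] using h

theorem eq9_sum_eq (hQ : QSystemCondition A) (g p q x : G) :
    ∑ l, A g 0 l * A (g - p + x) (-x) (l + p) * A (g - q) x (l + q)
      = shiftSign ε p g x * shiftSign ε q g x *
          (A g (-x) p * A g x q * ε x (g - x) * ε x (g + p - x))
        - ε x (g - p - x) * ((if p - q + x = 0 then 1 else 0) - (if x = 0 then 1 else 0) / dC G) /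
          (dC G - 1) := by
  simp only [mul_assoc (A g 0 _)]
  rw [hsol.sum_A_zero_left_mul hQ, zero_add, zero_add, hsol.A_neg_left_mul_A,
    hsol.sum_A_neg_left_mul_A_add]

theorem eq9_product_eq (g p q x : G) :
    ε p (g - p + x) * ε (p + x) (g - p + q - x) * ε q (g - q) * ε (q - x) (g - q + x) *
        A g (p + x) q * A (g - p) (q - x) p
      = shiftSign ε p g x * shiftSign ε q g x *
        (A g (p + x) q * A g (q - x) p * ε x (g + q - x) * ε x (g + p + q - x)) := by
  rw [hsol.A_sub_right]
  linear_combination (A g (p + x) q * A g (q - x) p) * hsol.isSignCocycle.eq9_sign_eq p q x g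

end EtaOne

end PolyEqs1to8

theorem eq9At_one_neg_iff {G : Type} [AddCommGroup G] [Fintype G] [DecidableEq G]
    (ε : G → G → ℂ) (A : G → G → G → ℂ) (g p q x : G) :
    Eq9At ε 1 A g p q x (-x) ↔
      ∑ l, A g 0 l * A (g - p + x) (-x) (l + p) * A (g - q) x (l + q)
        = ε p (g - p + x) * ε (p + x) (g - p + q - x) * ε q (g - q) * ε (q - x) (g - q + x) *
            A g (p + x) q * A (g - p) (q - x) p
          - (if x = 0 then 1 else 0) / dC G := by
  simp [Eq9At, ← sub_eq_add_neg, ← ite_and]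

/-- Under equations (1)–(8) and the `Q`-system condition `A_g(h,0) = δ_{h,0} − 1/(d−1)`,
the instance of equation (9) with `y = −x` is equivalent to the simplified relation (AA−AA). -/
theorem eq9_y_neg_x_iff
    {G : Type} [AddCommGroup G] [Fintype G] [DecidableEq G]
    (ε : G → G → ℂ) (η : G → ℂ) (A : G → G → G → ℂ)
    (hsol : PolyEqs1to8 ε η A)
    (hQ : ∀ g h : G, A g h 0 = (if h = (0 : G) then (1 : ℂ) else 0) - 1 / (dC G - 1)) :
    ∀ g p q x : G,
      Eq9At ε η A g p q x (-x) ↔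
        A g (-x) p * A g x q * ε x (g - x) * ε x (g + p - x)
          - A g (p + x) q * A g (q - x) p * ε x (g + q - x) * ε x (g + p + q - x)
        = (if p - q + x = (0 : G) then (1 : ℂ) else 0) * ε x (g + p) / (dC G - 1)
          - (if x = (0 : G) then (1 : ℂ) else 0) / (dC G - 1) := by
  intro g p q x
  obtain rfl := hsol.eta_eq_one hQ
  have hε := hsol.isSignCocycle
  have hsign : shiftSign ε p g x * shiftSign ε q g x ≠ 0 :=
    mul_ne_zero (left_ne_zero_of_mul_eq_one (hε.shiftSign_mul_self p g x))
      (left_ne_zero_of_mul_eq_one (hε.shiftSign_mul_self q g x))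
  rw [eq9At_one_neg_iff, hsol.eq9_sum_eq hQ, hsol.eq9_product_eq, sub_eq_sub_iff_sub_eq_sub,
    ← mul_sub, hε.delta_terms_eq (dC_ne_zero G) (dC_ne_one G), mul_right_inj' hsign]
end

section
/- Let G be a finite abelian group of order n with d = (n+√(n²+4))/2, and let (ε,η,A) be a solution of the polynomial equations for G satisfying in addition A_0(h,0) = δ_{h,0} − 1/(d−1) for all h ∈ G. Then for all h,k ∈ G: |A_0(h,k)|² = δ_{h,0}·δ_{k,0} − (δ_{h,0} + δ_{k,0} + δ_{h,k})/(d−1) + d/(d−1)². -/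
open scoped BigOperators
open Complex

/-- A solution of the polynomial equations (1)–(9) for a finite abelian group `G`. -/
structure PolySolution {G : Type} [AddCommGroup G] [Fintype G] [DecidableEq G]
    (ε : G → G → ℂ) (η : G → ℂ) (A : G → G → G → ℂ)
    extends PolyEqs1to8 ε η A : Prop where
  eq9 : ∀ g p q x y : G, Eq9At ε η A g p q x y

theorem dR_ne_zero (G : Type) [Fintype G] [Nonempty G] : dR G ≠ 0 :=
  (zero_lt_one.trans (one_lt_dR G)).ne'

theorem dR_sub_one_ne_zero (G : Type) [Fintype G] [Nonempty G] : dR G - 1 ≠ 0 :=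
  (sub_pos.2 (one_lt_dR G)).ne'

theorem one_sub_card_div_dR_sub_one (G : Type) [Fintype G] [Nonempty G] :
    1 - Fintype.card G * (1 / (dR G - 1)) = -1 / dR G := by
  have hd₀ := dR_ne_zero G
  have hd₁ := dR_sub_one_ne_zero G
  field_simp
  linear_combination dR_sq G

theorem sum_ite_sub_mul {ι R : Type*} [Fintype ι] [DecidableEq ι] [NonAssocRing R]
    (i : ι) (c : R) (f : ι → R) :
    ∑ j, ((if j = i then 1 else 0) - c) * f j = f i - c * ∑ j, f j := by
  simp [sub_mul, Finset.mul_sum]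

/-- The vector `u_g(h) = η_g A_g(h - g, 0)` attached to `g`. It is defined as a real part so as to
be real-valued; for a solution nothing is lost, by `PolyEqs1to8.ofReal_realColumn`. -/
noncomputable def realColumn {G : Type} [AddCommGroup G] (η : G → ℂ) (A : G → G → G → ℂ)
    (g h : G) : ℝ :=
  (η g * A g (h - g) 0).re

namespace PolyEqs1to8

variable {G : Type} [AddCommGroup G] [Fintype G] [DecidableEq G]
  {ε : G → G → ℂ} {η : G → ℂ} {A : G → G → G → ℂ}

theorem conj_eta_mul_eta (hA : PolyEqs1to8 ε η A) (g : G) : starRingEnd ℂ (η g) * η g = 1 := by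
  rw [conj_mul', norm_eq_one_of_pow_eq_one (hA.eq2' g) three_ne_zero]
  norm_num

theorem conj_eta (hA : PolyEqs1to8 ε η A) (g : G) : starRingEnd ℂ (η g) = η g ^ 2 := by
  linear_combination η g ^ 2 * hA.conj_eta_mul_eta g - starRingEnd ℂ (η g) * hA.eq2' g

theorem eta_ne_zero (hA : PolyEqs1to8 ε η A) (g : G) : η g ≠ 0 :=
  right_ne_zero_of_mul_eq_one (hA.conj_eta_mul_eta g)

theorem eta_sub (hA : PolyEqs1to8 ε η A) (g h : G) : η (g - h) = η (g + h) := by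
  simpa using (hA.eq2 (g - h) h).symm

theorem eps_mul_self (hA : PolyEqs1to8 ε η A) (h g : G) : ε h g * ε h g = 1 :=
  mul_self_eq_one_iff.2 (hA.eps_pm h g)

theorem conj_eps (hA : PolyEqs1to8 ε η A) (h g : G) : starRingEnd ℂ (ε h g) = ε h g := by
  rcases hA.eps_pm h g with hε | hε <;> simp [hε]

theorem eta_mul_A_zero_right (hA : PolyEqs1to8 ε η A) (g h : G) :
    η g * A g h 0 = ε (-h) g * A g (-h) (-h) := by
  have h7 : A g h 0 = starRingEnd ℂ (η g) * ε (-h) (g + h) * ε (-h) g * ε (-h) (g + h) *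
      A g (-h) (-h) := by
    simpa using hA.eq7b g h 0
  rw [h7]
  linear_combination
    (η g * starRingEnd ℂ (η g) * ε (-h) g * A g (-h) (-h)) * hA.eps_mul_self (-h) (g + h) +
      ε (-h) g * A g (-h) (-h) * hA.conj_eta_mul_eta g

theorem ofReal_realColumn (hA : PolyEqs1to8 ε η A) (g h : G) :
    (realColumn η A g h : ℂ) = η g * A g (h - g) 0 := by
  refine conj_eq_iff_re.1 ?_
  rw [hA.eta_mul_A_zero_right, map_mul, hA.conj_eps, ← hA.eq6]

theorem A_zero_right (hA : PolyEqs1to8 ε η A) (g h : G) :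
    A g (h - g) 0 = starRingEnd ℂ (η g) * realColumn η A g h := by
  rw [hA.ofReal_realColumn, ← mul_assoc, hA.conj_eta_mul_eta, one_mul]

theorem A_zero_left_s7 (hA : PolyEqs1to8 ε η A) (g h : G) :
    A g 0 (h - g) = η g * realColumn η A g h := by
  rw [hA.eq6, hA.A_zero_right, map_mul, conj_conj, conj_ofReal]

theorem sum_realColumn (hA : PolyEqs1to8 ε η A) (g : G) :
    ∑ h, realColumn η A g h = -1 / dR G := by
  apply ofReal_injective
  push_cast
  calc ∑ h, (realColumn η A g h : ℂ) = η g * ∑ h, A g (h - g) 0 := by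
        simp only [hA.ofReal_realColumn, Finset.mul_sum]
    _ = η g * ∑ h, A g h 0 := by rw [← Equiv.sum_comp (Equiv.subRight g) (A g · 0)]; rfl
    _ = -1 / (dR G : ℂ) := by
        rw [hA.eq3, dC]
        linear_combination (-1 / (dR G : ℂ)) * hA.conj_eta_mul_eta g

theorem sum_realColumn_mul_realColumn (hA : PolyEqs1to8 ε η A) (g g' : G) :
    ∑ h, realColumn η A g h * realColumn η A g' h = (if g = g' then 1 else 0) - 1 / dR G := by
  have hphase : starRingEnd ℂ (η g) * η g' ≠ 0 :=
    mul_ne_zero (star_ne_zero.2 (hA.eta_ne_zero g)) (hA.eta_ne_zero g')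
  apply ofReal_injective
  push_cast
  apply mul_left_cancel₀ hphase
  calc starRingEnd ℂ (η g) * η g' * ∑ h, (realColumn η A g h * realColumn η A g' h : ℂ)
      = ∑ h, A g (h - g) 0 * starRingEnd ℂ (A g' (h - g') 0) := by
        simp only [hA.A_zero_right, map_mul, conj_conj, conj_ofReal, Finset.mul_sum,
          mul_mul_mul_comm]
    _ = (if g = g' then 1 else 0) - starRingEnd ℂ (η g) * η g' / dR G := by
        simp [hA.eq4, dC]
    _ = starRingEnd ℂ (η g) * η g' * (↑(if g = g' then (1 : ℝ) else 0) - 1 / (dR G : ℂ)) := by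
        split_ifs with hg
        · rw [← hg, hA.conj_eta_mul_eta]
          simp
        · push_cast
          ring

theorem A_mul_A_sub (hA : PolyEqs1to8 ε η A) (g h k : G) :
    η (g + h + k) * starRingEnd ℂ (η (g + h)) * ε h (g - h) * ε h (g - h + k) *
        A g h k * A (g - h) k h =
      η g * η (g + h) * η (g + k) * ‖A g h k‖ ^ 2 := by
  have h8 : A (g - h) k h = η (g + h) ^ 2 * η (g + h + k) ^ 2 * η g * η (g + k) *
      ε h (g - h) * ε h (g - h + k) * starRingEnd ℂ (A g h k) := by
    have hη : η (g - h + k) = η (g + h + k) := by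
      rw [← add_sub_right_comm, hA.eta_sub, add_right_comm]
    have hidx : g - h + k + h = g + k := by abel
    rw [hA.eq8b (g - h) k h, sub_add_cancel, hidx, hη, hA.eta_sub, hA.conj_eta, hA.conj_eta,
      ← hA.eq6]
  rw [h8, hA.conj_eta, ← mul_conj']
  calc _ = (ε h (g - h) * ε h (g - h)) * (ε h (g - h + k) * ε h (g - h + k)) *
        η (g + h) ^ 3 * η (g + h + k) ^ 3 *
          (η g * η (g + h) * η (g + k) * (A g h k * starRingEnd ℂ (A g h k))) := by ring
    _ = _ := by simp only [hA.eps_mul_self, hA.eq2', one_mul]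

theorem sum_A_mul_A_mul_A (hA : PolyEqs1to8 ε η A) (g h k : G) :
    ∑ l, A g 0 l * A (g - h) 0 (l + h) * A (g - k) 0 (l + k) =
      η g * η (g + h) * η (g + k) *
        ∑ m, (realColumn η A g m * realColumn η A (g - h) m * realColumn η A (g - k) m : ℂ) := by
  rw [← Equiv.sum_comp (Equiv.subRight g), Finset.mul_sum]
  refine Finset.sum_congr rfl fun m _ => ?_
  have hh : m - g + h = m - (g - h) := by abel
  have hk : m - g + k = m - (g - k) := by abel
  simp only [Equiv.subRight_apply, hh, hk, hA.A_zero_left_s7, hA.eta_sub]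
  ring

theorem norm_sq_eq_sum_realColumn (hA : PolyEqs1to8 ε η A) {g h k : G}
    (h9 : Eq9At ε η A g h k 0 0) :
    ‖A g h k‖ ^ 2 = 1 / dR G +
      ∑ m, realColumn η A g m * realColumn η A (g - h) m * realColumn η A (g - k) m := by
  have hphase : η g * η (g + h) * η (g + k) ≠ 0 :=
    mul_ne_zero (mul_ne_zero (hA.eta_ne_zero _) (hA.eta_ne_zero _)) (hA.eta_ne_zero _)
  simp only [Eq9At, add_zero, neg_zero, if_true, one_mul, hA.sum_A_mul_A_mul_A, dC] at h9
  apply ofReal_injective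
  push_cast
  apply mul_left_cancel₀ hphase
  rw [← hA.A_mul_A_sub, mul_add, h9]
  -- The factors `η_g`, `η_{g+k}` and `ε_k(g - k)` of (9) cancel at `x = y = 0`.
  linear_combination
    (-(η (g + h + k) * starRingEnd ℂ (η (g + h)) * ε h (g - h) * ε h (g - h + k) *
      A g h k * A (g - h) k h)) *
    (ε k (g - k) * ε k (g - k) * (η (g + k) * starRingEnd ℂ (η (g + k))) *
        hA.conj_eta_mul_eta g +
      ε k (g - k) * ε k (g - k) * hA.conj_eta_mul_eta (g + k) + hA.eps_mul_self k (g - k))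

theorem realColumn_of_Qsystem (hA : PolyEqs1to8 ε η A) {g : G} {c : ℂ}
    (hQ : ∀ h, A g h 0 = c * ((if h = 0 then 1 else 0) - 1 / (dC G - 1))) (h : G) :
    realColumn η A g h = (if h = g then 1 else 0) - 1 / (dR G - 1) := by
  have hd : (dR G : ℂ) ≠ 0 := ofReal_ne_zero.2 (dR_ne_zero G)
  have hc : c = starRingEnd ℂ (η g) := by
    have hsum : c * (-1 / (dR G : ℂ)) = -starRingEnd ℂ (η g) / dR G := by
      calc c * (-1 / (dR G : ℂ)) = c * (1 - Fintype.card G * (1 / (dC G - 1))) := by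
            rw [dC]
            exact_mod_cast congrArg (c * ofReal ·) (one_sub_card_div_dR_sub_one G).symm
        _ = ∑ h, A g h 0 := by
            simp [hQ, ← Finset.mul_sum]
        _ = _ := hA.eq3 g
    field_simp at hsum
    linear_combination -hsum
  apply ofReal_injective
  rw [hA.ofReal_realColumn, hQ, hc, ← mul_assoc, mul_comm (η g), hA.conj_eta_mul_eta, one_mul, dC]
  simp [sub_eq_zero, apply_ite ofReal]

theorem realColumn_apply_of_realColumn_eq (hA : PolyEqs1to8 ε η A) {g : G}
    (hg : ∀ h, realColumn η A g h = (if h = g then 1 else 0) - 1 / (dR G - 1)) (g' : G) :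
    realColumn η A g' g = (if g' = g then 1 else 0) - 1 / (dR G - 1) := by
  have hd₀ := dR_ne_zero G
  have hd₁ := dR_sub_one_ne_zero G
  have hgram := hA.sum_realColumn_mul_realColumn g g'
  simp only [hg, sum_ite_sub_mul, hA.sum_realColumn, eq_comm (a := g)] at hgram
  rw [eq_add_of_sub_eq hgram]
  field_simp
  ring

end PolyEqs1to8

theorem abs_A_zero_sq_of_Qsystem_general
    {G : Type} [AddCommGroup G] [Fintype G] [DecidableEq G]
    {ε : G → G → ℂ} {η : G → ℂ} {A : G → G → G → ℂ} (hA : PolyEqs1to8 ε η A)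
    {g : G} {c : ℂ} (hQ : ∀ h, A g h 0 = c * ((if h = 0 then 1 else 0) - 1 / (dC G - 1)))
    {h k : G} (h9 : Eq9At ε η A g h k 0 0) :
    ‖A g h k‖ ^ 2
      = (if h = 0 then 1 else 0) * (if k = 0 then 1 else 0)
        - ((if h = 0 then 1 else 0) + (if k = 0 then 1 else 0) + (if h = k then 1 else 0)) /
            (dR G - 1)
        + dR G / (dR G - 1) ^ 2 := by
  have hd₀ := dR_ne_zero G
  have hd₁ := dR_sub_one_ne_zero G
  have hg := hA.realColumn_of_Qsystem hQ
  rw [hA.norm_sq_eq_sum_realColumn h9]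
  simp only [mul_assoc, hg, sum_ite_sub_mul, hA.realColumn_apply_of_realColumn_eq hg,
    hA.sum_realColumn_mul_realColumn, sub_eq_self, sub_right_inj]
  field_simp
  ring

/-- For a solution of the polynomial equations satisfying `A_0(h,0) = δ_{h,0} − 1/(d−1)`,
one has `|A_0(h,k)|² = δ_{h,0}·δ_{k,0} − (δ_{h,0}+δ_{k,0}+δ_{h,k})/(d−1) + d/(d−1)²`. -/
theorem abs_A_zero_sq_of_Qsystem
    {G : Type} [AddCommGroup G] [Fintype G] [DecidableEq G]
    (ε : G → G → ℂ) (η : G → ℂ) (A : G → G → G → ℂ)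
    (hsol : PolySolution ε η A)
    (hQ : ∀ h : G, A 0 h 0 = (if h = (0 : G) then (1 : ℂ) else 0) - 1 / (dC G - 1)) :
    ∀ h k : G,
      (‖A 0 h k‖ : ℝ) ^ 2
        = (if h = (0 : G) then (1 : ℝ) else 0) * (if k = (0 : G) then (1 : ℝ) else 0)
          - ((if h = (0 : G) then (1 : ℝ) else 0) + (if k = (0 : G) then (1 : ℝ) else 0)
              + (if h = k then (1 : ℝ) else 0)) / (dR G - 1)
          + dR G / (dR G - 1) ^ 2 := by
  intro h k
  exact abs_A_zero_sq_of_Qsystem_general (c := 1) hsol.toPolyEqs1to8 (by simpa using hQ)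
    (hsol.eq9 0 h k 0 0)
end

section
/- Let G be a finite abelian group of order n with d = (n+√(n²+4))/2, let (ε,η,A) be a solution of the polynomial equations for G, and set x_{g,h} := η_g·A_g(h,0). Then for all g,h,k ∈ G: Σ_{l∈G} x_{g,l}·x_{g−h,l+h}·x_{g−k,l+k} = |A_g(h,k)|² − 1/d. -/
open scoped BigOperators
open Complex

/-!
Equation (9) at `x = y = 0` expresses the cubic sum of the entries `A_g(0, l)` through the product
`A_g(h,k) · A_{g-h}(k,h)`. By (8) and Hermitian symmetry (6), `A_{g-h}(k,h)` is the conjugate of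
`A_g(h,k)` up to a phase, and this phase combines with the one in (9) to `η_g η_{g+h} η_{g+k}`,
the same factor that multiplies `1/d`. Conjugating the sum turns `A_g(0, l)` into `A_g(l, 0)`, and
the factors `η` in `x_{g,h} = η_g A_g(h,0)` then cancel the remaining phase.
-/

section

open scoped ComplexConjugate

theorem conj_eq_self_of_eq_one_or_eq_neg_one {z : ℂ} (hz : z = 1 ∨ z = -1) : conj z = z := by
  rcases hz with rfl | rfl <;> simp

theorem mul_conj_eq_one_of_norm_eq_one {z : ℂ} (hz : ‖z‖ = 1) : z * conj z = 1 := by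
  simp [mul_conj', hz]

theorem conj_eq_sq_of_pow_three_eq_one {z : ℂ} (hz : z ^ 3 = 1) : conj z = z ^ 2 := by
  rw [← inv_eq_conj (norm_eq_one_of_pow_eq_one hz three_ne_zero)]
  exact inv_eq_of_mul_eq_one_right (by rw [← pow_succ', hz])

theorem map_sub_eq_map_add_of_map_add_add_self {G α : Type*} [AddGroup G] {f : G → α}
    (hf : ∀ g h, f (g + h + h) = f g) (g h : G) : f (g - h) = f (g + h) := by
  rw [← hf (g - h) h, sub_add_cancel]

theorem Eq9At.sum_zero_eq {G : Type} [AddCommGroup G] [Fintype G] [DecidableEq G]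
    {ε : G → G → ℂ} {η : G → ℂ} {A : G → G → G → ℂ} {g p q : G} (h9 : Eq9At ε η A g p q 0 0)
    (hε : ε q (g - q) = 1 ∨ ε q (g - q) = -1) (hg : ‖η g‖ = 1) (hgq : ‖η (g + q)‖ = 1) :
    ∑ l, A g 0 l * A (g - p) 0 (l + p) * A (g - q) 0 (l + q) =
      η (g + p + q) * conj (η (g + p)) * ε p (g - p) * ε p (g - p + q) *
          A g p q * A (g - p) q p -
        η g * η (g + p) * η (g + q) * ((1 / dR G : ℝ) : ℂ) := by
  simp only [Eq9At, dC, add_zero, neg_zero, if_true, one_mul] at h9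
  rw [ofReal_div, ofReal_one]
  have hεsq : ε q (g - q) * ε q (g - q) = 1 := mul_self_eq_one_iff.2 hε
  have hηg : η g * conj (η g) = 1 := mul_conj_eq_one_of_norm_eq_one hg
  have hηgq : η (g + q) * conj (η (g + q)) = 1 := mul_conj_eq_one_of_norm_eq_one hgq
  set u := η (g + p + q) * conj (η (g + p)) * ε p (g - p) * ε p (g - p + q) *
    A g p q * A (g - p) q p
  calc
    _ = (η g * conj (η g)) * (η (g + q) * conj (η (g + q))) * (ε q (g - q) * ε q (g - q)) * u -
          η g * η (g + p) * η (g + q) * (1 / dR G) := by rw [h9]; ring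
    _ = _ := by rw [hηg, hηgq, hεsq]; ring

variable {G : Type*} [AddCommGroup G] {ε : G → G → ℂ} {η : G → ℂ} {A : G → G → G → ℂ}

theorem A_sub_swap_eq
    (hε : ∀ h g, ε h g = 1 ∨ ε h g = -1)
    (hper : ∀ g h, η (g + h + h) = η g)
    (hswap : ∀ g h k, A g k h = conj (A g h k))
    (hshift : ∀ g h k, A g h k = η g * η (g + k) * conj (η (g + h)) * conj (η (g + h + k)) *
      ε h g * ε h (g + k) * A (g + h) h k)
    (g h k : G) :
    A (g - h) k h = conj (η (g + h)) * conj (η (g + h + k)) * η g * η (g + k) *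
      ε h (g - h) * ε h (g - h + k) * conj (A g h k) := by
  have hη₁ : η (g - h) = η (g + h) := map_sub_eq_map_add_of_map_add_add_self hper g h
  have hη₂ : η (g - h + k) = η (g + h + k) := by
    rw [sub_add_eq_add_sub, map_sub_eq_map_add_of_map_add_add_self hper, add_right_comm]
  rw [hswap, hshift, sub_add_cancel, hη₁, hη₂]
  simp only [map_mul, conj_conj, conj_eq_self_of_eq_one_or_eq_neg_one (hε _ _)]

variable [Fintype G]

theorem sum_A_zero_mul_eq {c : ℂ}
    (hε : ∀ h g, ε h g = 1 ∨ ε h g = -1)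
    (hper : ∀ g h, η (g + h + h) = η g)
    (hcube : ∀ g, η g ^ 3 = 1)
    (hswap : ∀ g h k, A g k h = conj (A g h k))
    (hshift : ∀ g h k, A g h k = η g * η (g + k) * conj (η (g + h)) * conj (η (g + h + k)) *
      ε h g * ε h (g + k) * A (g + h) h k)
    (hsum : ∀ g p q, ∑ l, A g 0 l * A (g - p) 0 (l + p) * A (g - q) 0 (l + q) =
      η (g + p + q) * conj (η (g + p)) * ε p (g - p) * ε p (g - p + q) *
          A g p q * A (g - p) q p -
        η g * η (g + p) * η (g + q) * c)
    (g h k : G) :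
    ∑ l, A g 0 l * A (g - h) 0 (l + h) * A (g - k) 0 (l + k) =
      η g * η (g + h) * η (g + k) * (‖A g h k‖ ^ 2 - c) := by
  have hε₁ : ε h (g - h) * ε h (g - h) = 1 := mul_self_eq_one_iff.2 (hε _ _)
  have hε₂ : ε h (g - h + k) * ε h (g - h + k) = 1 := mul_self_eq_one_iff.2 (hε _ _)
  have hη₁ : η (g + h + k) * conj (η (g + h + k)) = 1 :=
    mul_conj_eq_one_of_norm_eq_one (norm_eq_one_of_pow_eq_one (hcube _) three_ne_zero)
  have hη₂ : conj (η (g + h)) ^ 2 = η (g + h) := by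
    rw [← map_pow, ← conj_eq_sq_of_pow_three_eq_one (hcube _), conj_conj]
  calc
    _ = (η (g + h + k) * conj (η (g + h + k))) * (ε h (g - h) * ε h (g - h)) *
          (ε h (g - h + k) * ε h (g - h + k)) *
          (η g * conj (η (g + h)) ^ 2 * η (g + k)) * (A g h k * conj (A g h k)) -
          η g * η (g + h) * η (g + k) * c := by
      rw [hsum, A_sub_swap_eq hε hper hswap hshift]; ring
    _ = _ := by rw [hη₁, hε₁, hε₂, hη₂, mul_conj']; ring

theorem sum_xxx_eq_mul_conj_sum_A_zero {x : G → G → ℂ}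
    (hper : ∀ g h, η (g + h + h) = η g)
    (hswap : ∀ g h k, A g k h = conj (A g h k))
    (hx : ∀ g h, x g h = η g * A g h 0)
    (g h k : G) :
    ∑ l, x g l * x (g - h) (l + h) * x (g - k) (l + k) =
      η g * η (g + h) * η (g + k) *
        conj (∑ l, A g 0 l * A (g - h) 0 (l + h) * A (g - k) 0 (l + k)) := by
  simp only [map_sum, map_mul, ← hswap, Finset.mul_sum, hx,
    map_sub_eq_map_add_of_map_add_add_self hper]
  exact Finset.sum_congr rfl fun l _ => by ring

/-- `hsum` is equation (9) at `x = y = 0`, after cancelling phases against their conjugates, with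
`c` in place of `1/d`. -/
theorem sum_xxx_eq_abs_A_sq_general {x : G → G → ℂ} {c : ℝ}
    (hε : ∀ h g, ε h g = 1 ∨ ε h g = -1)
    (hper : ∀ g h, η (g + h + h) = η g)
    (hcube : ∀ g, η g ^ 3 = 1)
    (hswap : ∀ g h k, A g k h = conj (A g h k))
    (hshift : ∀ g h k, A g h k = η g * η (g + k) * conj (η (g + h)) * conj (η (g + h + k)) *
      ε h g * ε h (g + k) * A (g + h) h k)
    (hsum : ∀ g p q, ∑ l, A g 0 l * A (g - p) 0 (l + p) * A (g - q) 0 (l + q) =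
      η (g + p + q) * conj (η (g + p)) * ε p (g - p) * ε p (g - p + q) *
          A g p q * A (g - p) q p -
        η g * η (g + p) * η (g + q) * c)
    (hx : ∀ g h, x g h = η g * A g h 0)
    (g h k : G) :
    ∑ l, x g l * x (g - h) (l + h) * x (g - k) (l + k) = (‖A g h k‖ : ℂ) ^ 2 - c := by
  have hunit (a : G) : η a * conj (η a) = 1 :=
    mul_conj_eq_one_of_norm_eq_one (norm_eq_one_of_pow_eq_one (hcube a) three_ne_zero)
  rw [sum_xxx_eq_mul_conj_sum_A_zero hper hswap hx,
    sum_A_zero_mul_eq hε hper hcube hswap hshift hsum]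
  simp only [map_mul, map_sub, map_pow, conj_ofReal]
  calc
    _ = (η g * conj (η g)) * (η (g + h) * conj (η (g + h))) * (η (g + k) * conj (η (g + k))) *
          ((‖A g h k‖ : ℂ) ^ 2 - c) := by ring
    _ = _ := by rw [hunit, hunit, hunit]; ring

end

/-- For a solution of the polynomial equations, with `x_{g,h} := η_g·A_g(h,0)`,
`Σ_l x_{g,l}·x_{g−h,l+h}·x_{g−k,l+k} = |A_g(h,k)|² − 1/d`. -/
theorem sum_xxx_eq_abs_A_sq
    {G : Type} [AddCommGroup G] [Fintype G] [DecidableEq G]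
    (ε : G → G → ℂ) (η : G → ℂ) (A : G → G → G → ℂ)
    (hsol : PolySolution ε η A)
    (x : G → G → ℂ) (hx : ∀ g h : G, x g h = η g * A g h 0) :
    ∀ g h k : G,
      ∑ l : G, x g l * x (g - h) (l + h) * x (g - k) (l + k)
        = ((‖A g h k‖ : ℝ) : ℂ) ^ 2 - 1 / dC G := by
  have hnorm (a : G) : ‖η a‖ = 1 := norm_eq_one_of_pow_eq_one (hsol.eq2' a) three_ne_zero
  simpa [dC] using sum_xxx_eq_abs_A_sq_general hsol.eps_pm hsol.eq2 hsol.eq2' hsol.eq6 hsol.eq8a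
    (fun g p q => (hsol.eq9 g p q 0 0).sum_zero_eq (hsol.eps_pm _ _) (hnorm _) (hnorm _)) hx
end

section
/- Let d = (3+√13)/2. A function x : ℤ/3ℤ → ℝ satisfies Σ_{h} x_h = −1/d, Σ_h x_h·x_{h+g} = δ_{g,0} − 1/d for all g, and Σ_h x_h²·x_{h+g} = x_g² − 1/d for all g, if and only if the triple (x_0,x_1,x_2) equals, possibly after the swap x_1 ↔ x_2 (the action of the automorphism h ↦ −h of ℤ/3ℤ), one of the following three triples: ((7−√13)/6, (1−√13)/6, (1−√13)/6), ((2−√13)/3, (5−√13+√(6(1+√13)))/12, (5−√13−√(6(1+√13)))/12), (0, (3−√13+√(2(−1+√13)))/4, (3−√13−√(2(−1+√13)))/4). -/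
open scoped BigOperators

/-!
Write `e = d⁻¹`, so that `e² + 3e = 1`, and `(a, b, c) = (x₀, x₁, x₂)`. The linear and quadratic
equations prescribe the elementary symmetric functions `a + b + c = ab + bc + ca = -e`; by Newton's
identity the cubic equation at `g = 0` then says `a² = 3abc`, a cubic equation in `a` with roots
`0`, `(2 - e) / 3` and `-(1 + 2e) / 3`. For each root the remaining two coordinates are determined
up to order by their sum and product. The cubic equations at `g = ±1` come for free: their sum
holds because `a² = 3abc`, and their difference is `(b - c) a (3a + 2e + 1) = 0`, which holds since
`3(b - c)² = 4 - (3a + e)²` forces `b = c` when `a = (2 - e) / 3`.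
-/

/-- The degenerate equations (Deg1')-(Deg3') for a function `x` on a finite group `G`, with
parameter `d`; on `ℤ/3ℤ` the parameter of interest is a root of `d² = 3d + 1`. The group is written
additively, and the values of `x` are allowed to lie in any field. -/
def IsDegenerateSolution {G K : Type*} [Fintype G] [DecidableEq G] [AddGroup G] [Field K]
    (d : K) (x : G → K) : Prop :=
  (∑ h, x h = -1 / d) ∧
  (∀ g, ∑ h, x h * x (h + g) = (if g = 0 then 1 else 0) - 1 / d) ∧
  (∀ g, ∑ h, x h ^ 2 * x (h + g) = x g ^ 2 - 1 / d)

theorem isDegenerateSolution_zmod_three_iff {K : Type*} [Field K] (d : K) (x : ZMod 3 → K) :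
    IsDegenerateSolution d x ↔
      (x 0 + x 1 + x 2 = -(1 / d)) ∧
      (x 0 ^ 2 + x 1 ^ 2 + x 2 ^ 2 = 1 - 1 / d ∧
        x 0 * x 1 + x 1 * x 2 + x 2 * x 0 = -(1 / d)) ∧
      (x 0 ^ 3 + x 1 ^ 3 + x 2 ^ 3 = x 0 ^ 2 - 1 / d ∧
        x 0 ^ 2 * x 1 + x 1 ^ 2 * x 2 + x 2 ^ 2 * x 0 = x 1 ^ 2 - 1 / d ∧
        x 0 ^ 2 * x 2 + x 2 ^ 2 * x 1 + x 1 ^ 2 * x 0 = x 2 ^ 2 - 1 / d) := by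
  have sum_eq (f : ZMod 3 → K) : ∑ h, f h = f 0 + f 1 + f 2 := Fin.sum_univ_three f
  have forall_iff (P : ZMod 3 → Prop) : (∀ g, P g) ↔ P 0 ∧ P 1 ∧ P 2 :=
    (Fin.forall_fin_succ (n := 2)).trans (and_congr_right' Fin.forall_fin_two)
  have one_add_one : (1 : ZMod 3) + 1 = 2 := by decide
  have one_add_two : (1 : ZMod 3) + 2 = 0 := by decide
  have two_add_one : (2 : ZMod 3) + 1 = 0 := by decide
  have two_add_two : (2 : ZMod 3) + 2 = 1 := by decide
  have one_ne : (1 : ZMod 3) ≠ 0 := by decide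
  have two_ne : (2 : ZMod 3) ≠ 0 := by decide
  simp only [IsDegenerateSolution, sum_eq, forall_iff, one_add_one, one_add_two, two_add_one,
    two_add_two, one_ne, two_ne, add_zero, zero_add, if_true, if_false]
  grind

theorem one_div_sq_add_mul_one_div {K : Type*} [Field K] {n d : K} (hd : d ^ 2 = n * d + 1) :
    (1 / d) ^ 2 + n * (1 / d) = 1 := by
  have d_ne : d ≠ 0 := by
    rintro rfl
    simp at hd
  field_simp
  linear_combination -hd

section SymmetricFunctions

variable {R : Type*} [CommRing R] {a b c e : R}

theorem sum_sq_eq_of_esymm_eq (he : e ^ 2 + 3 * e = 1) (h₁ : a + b + c = -e)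
    (h₂ : a * b + b * c + c * a = -e) : a ^ 2 + b ^ 2 + c ^ 2 = 1 - e := by
  linear_combination he + (a + b + c - e) * h₁ - 2 * h₂

theorem sum_cube_eq_of_esymm_eq (he : e ^ 2 + 3 * e = 1) (h₁ : a + b + c = -e)
    (h₂ : a * b + b * c + c * a = -e) : a ^ 3 + b ^ 3 + c ^ 3 = 3 * a * b * c - e := by
  linear_combination (a ^ 2 + b ^ 2 + c ^ 2 - (a * b + b * c + c * a)) * h₁
    - e * (sum_sq_eq_of_esymm_eq he h₁ h₂ - h₂)

theorem three_mul_sub_sq_eq_of_esymm_eq (he : e ^ 2 + 3 * e = 1) (h₁ : a + b + c = -e)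
    (h₂ : a * b + b * c + c * a = -e) : 3 * (b - c) ^ 2 = 4 - (3 * a + e) ^ 2 := by
  linear_combination 4 * he + 3 * (b + c - e + 3 * a) * h₁ - 12 * h₂

variable [NoZeroDivisors R]

theorem sq_eq_three_mul_prod_iff (three_ne : (3 : R) ≠ 0) (he : e ^ 2 + 3 * e = 1)
    (h₁ : a + b + c = -e) (h₂ : a * b + b * c + c * a = -e) :
    a ^ 2 = 3 * a * b * c ↔ a = 0 ∨ 3 * a = 2 - e ∨ 3 * a = -(1 + 2 * e) := by
  have factorization : 3 * (a ^ 2 - 3 * a * b * c) =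
      -(a * ((3 * a - (2 - e)) * (3 * a - -(1 + 2 * e)))) := by
    linear_combination 2 * a * he + 9 * a ^ 2 * h₁ - 9 * a * h₂
  rw [← sub_eq_zero, ← mul_right_inj' three_ne, factorization]
  simp only [mul_zero, neg_eq_zero, mul_eq_zero, sub_eq_zero]

theorem cyclic_sum_eq_of_sq_eq (two_ne : (2 : R) ≠ 0) (three_ne : (3 : R) ≠ 0)
    (he : e ^ 2 + 3 * e = 1) (h₁ : a + b + c = -e) (h₂ : a * b + b * c + c * a = -e)
    (ha : a ^ 2 = 3 * a * b * c) :
    a ^ 2 * b + b ^ 2 * c + c ^ 2 * a = b ^ 2 - e := by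
  have sum_eq : a ^ 2 * b + b ^ 2 * c + c ^ 2 * a + (a ^ 2 * c + c ^ 2 * b + b ^ 2 * a) =
      b ^ 2 + c ^ 2 - 2 * e := by
    linear_combination (a * b + b * c + c * a) * h₁ - e * h₂ + he + ha
      - sum_sq_eq_of_esymm_eq he h₁ h₂
  have vanishing : (b - c) * (a * (3 * a + 2 * e + 1)) = 0 := by
    rcases (sq_eq_three_mul_prod_iff three_ne he h₁ h₂).1 ha with h | h | h
    · simp [h]
    · have three_mul_sub_sq : 3 * (b - c) ^ 2 = 0 := by
        rw [three_mul_sub_sq_eq_of_esymm_eq he h₁ h₂, h]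
        ring
      have sub_sq : (b - c) ^ 2 = 0 := (mul_eq_zero.1 three_mul_sub_sq).resolve_left three_ne
      rw [(pow_eq_zero_iff two_ne_zero).1 sub_sq, zero_mul]
    · simp [h]
  have difference_eq : a ^ 2 * b + b ^ 2 * c + c ^ 2 * a - (a ^ 2 * c + c ^ 2 * b + b ^ 2 * a) =
      b ^ 2 - c ^ 2 := by
    linear_combination vanishing + (b - c) * (h₂ - (2 * a + 1) * h₁)
  refine mul_left_cancel₀ two_ne ?_
  linear_combination sum_eq + difference_eq

theorem add_eq_add_and_mul_eq_mul_iff {u v : R} :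
    b + c = u + v ∧ b * c = u * v ↔ (b = u ∧ c = v) ∨ (b = v ∧ c = u) := by
  constructor
  · rintro ⟨h_add, h_mul⟩
    have factorization : (b - u) * (b - v) = 0 := by linear_combination b * h_add - h_mul
    rcases mul_eq_zero.1 factorization with h | h
    · exact .inl ⟨sub_eq_zero.1 h, by linear_combination h_add - h⟩
    · exact .inr ⟨sub_eq_zero.1 h, by linear_combination h_add - h⟩
  · rintro (⟨rfl, rfl⟩ | ⟨rfl, rfl⟩)
    · exact ⟨rfl, rfl⟩
    · exact ⟨add_comm _ _, mul_comm _ _⟩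

theorem esymm_eq_iff {p q u v : R} (h₁ : a + u + v = p) (h₂ : a * u + u * v + v * a = q) :
    a + b + c = p ∧ a * b + b * c + c * a = q ↔ (b = u ∧ c = v) ∨ (b = v ∧ c = u) := by
  rw [← add_eq_add_and_mul_eq_mul_iff]
  constructor
  · rintro ⟨h_sum, h_pairs⟩
    have h_add : b + c = u + v := by linear_combination h_sum - h₁
    exact ⟨h_add, by linear_combination h_pairs - h₂ - a * h_add⟩
  · rintro ⟨h_add, h_mul⟩
    exact ⟨by linear_combination h_add + h₁, by linear_combination h_mul + h₂ + a * h_add⟩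

end SymmetricFunctions

section Field

variable {K : Type*} [Field K]

theorem isDegenerateSolution_zmod_three_iff_esymm (two_ne : (2 : K) ≠ 0) (three_ne : (3 : K) ≠ 0)
    {d : K} (hd : d ^ 2 = 3 * d + 1) (x : ZMod 3 → K) :
    IsDegenerateSolution d x ↔
      (x 0 = 0 ∨ 3 * x 0 = 2 - 1 / d ∨ 3 * x 0 = -(1 + 2 * (1 / d))) ∧
      x 0 + x 1 + x 2 = -(1 / d) ∧ x 0 * x 1 + x 1 * x 2 + x 2 * x 0 = -(1 / d) := by
  have he := one_div_sq_add_mul_one_div hd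
  rw [isDegenerateSolution_zmod_three_iff]
  constructor
  · rintro ⟨h₁, ⟨-, h₂⟩, h_cube, -, -⟩
    exact ⟨(sq_eq_three_mul_prod_iff three_ne he h₁ h₂).1
      (by linear_combination sum_cube_eq_of_esymm_eq he h₁ h₂ - h_cube), h₁, h₂⟩
  · rintro ⟨h_root, h₁, h₂⟩
    have h_sq := (sq_eq_three_mul_prod_iff three_ne he h₁ h₂).2 h_root
    refine ⟨h₁, ⟨sum_sq_eq_of_esymm_eq he h₁ h₂, h₂⟩, ?_,
      cyclic_sum_eq_of_sq_eq two_ne three_ne he h₁ h₂ h_sq, ?_⟩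
    · linear_combination sum_cube_eq_of_esymm_eq he h₁ h₂ - h_sq
    · exact cyclic_sum_eq_of_sq_eq two_ne three_ne he (by linear_combination h₁)
        (by linear_combination h₂) (by linear_combination h_sq)

theorem esymm_eq_iff_of_eq_zero (two_ne : (2 : K) ≠ 0) {s q a b c : K} (hs : s ^ 2 = 13)
    (hq : q ^ 2 = 2 * (-1 + s)) (ha : a = 0) :
    a + b + c = -((s - 3) / 2) ∧ a * b + b * c + c * a = -((s - 3) / 2) ↔
      (b = (3 - s + q) / 4 ∧ c = (3 - s - q) / 4) ∨
      (b = (3 - s - q) / 4 ∧ c = (3 - s + q) / 4) := by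
  have four_ne : (4 : K) ≠ 0 := (by norm_num : (2 * 2 : K) = 4) ▸ mul_ne_zero two_ne two_ne
  exact esymm_eq_iff (by grind) (by grind)

theorem esymm_eq_iff_of_eq_simple_root (two_ne : (2 : K) ≠ 0) (three_ne : (3 : K) ≠ 0)
    {s r a b c : K} (hs : s ^ 2 = 13) (hr : r ^ 2 = 6 * (1 + s)) (ha : a = (2 - s) / 3) :
    a + b + c = -((s - 3) / 2) ∧ a * b + b * c + c * a = -((s - 3) / 2) ↔
      (b = (5 - s + r) / 12 ∧ c = (5 - s - r) / 12) ∨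
      (b = (5 - s - r) / 12 ∧ c = (5 - s + r) / 12) := by
  have six_ne : (6 : K) ≠ 0 := (by norm_num : (2 * 3 : K) = 6) ▸ mul_ne_zero two_ne three_ne
  have twelve_ne : (12 : K) ≠ 0 := (by norm_num : (2 * 6 : K) = 12) ▸ mul_ne_zero two_ne six_ne
  exact esymm_eq_iff (by grind) (by grind)

theorem esymm_eq_iff_of_eq_double_root (two_ne : (2 : K) ≠ 0) (three_ne : (3 : K) ≠ 0)
    {s a b c : K} (hs : s ^ 2 = 13) (ha : a = (7 - s) / 6) :
    a + b + c = -((s - 3) / 2) ∧ a * b + b * c + c * a = -((s - 3) / 2) ↔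
      b = (1 - s) / 6 ∧ c = (1 - s) / 6 := by
  have six_ne : (6 : K) ≠ 0 := (by norm_num : (2 * 3 : K) = 6) ▸ mul_ne_zero two_ne three_ne
  exact (esymm_eq_iff (by grind) (by grind)).trans or_self_iff

theorem zmod_three_degenerate_solutions_general (two_ne : (2 : K) ≠ 0) (three_ne : (3 : K) ≠ 0)
    {s r q : K} (hs : s ^ 2 = 13) (hr : r ^ 2 = 6 * (1 + s)) (hq : q ^ 2 = 2 * (-1 + s))
    (x : ZMod 3 → K) :
    IsDegenerateSolution ((3 + s) / 2) x ↔
      (x 0 = (7 - s) / 6 ∧ x 1 = (1 - s) / 6 ∧ x 2 = (1 - s) / 6) ∨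
      (x 0 = (2 - s) / 3 ∧ x 1 = (5 - s + r) / 12 ∧ x 2 = (5 - s - r) / 12) ∨
      (x 0 = (2 - s) / 3 ∧ x 1 = (5 - s - r) / 12 ∧ x 2 = (5 - s + r) / 12) ∨
      (x 0 = 0 ∧ x 1 = (3 - s + q) / 4 ∧ x 2 = (3 - s - q) / 4) ∨
      (x 0 = 0 ∧ x 1 = (3 - s - q) / 4 ∧ x 2 = (3 - s + q) / 4) := by
  have hd : ((3 + s) / 2) ^ 2 = 3 * ((3 + s) / 2) + 1 := by grind
  have one_div_eq : 1 / ((3 + s) / 2) = (s - 3) / 2 :=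
    (eq_one_div_of_mul_eq_one_right (by grind)).symm
  rw [isDegenerateSolution_zmod_three_iff_esymm two_ne three_ne hd, one_div_eq]
  have double_root : 3 * x 0 = 2 - (s - 3) / 2 ↔ x 0 = (7 - s) / 6 := by grind
  have simple_root : 3 * x 0 = -(1 + 2 * ((s - 3) / 2)) ↔ x 0 = (2 - s) / 3 := by grind
  rw [double_root, simple_root, or_and_right, or_and_right,
    and_congr_right (esymm_eq_iff_of_eq_zero two_ne hs hq),
    and_congr_right (esymm_eq_iff_of_eq_double_root two_ne three_ne hs),
    and_congr_right (esymm_eq_iff_of_eq_simple_root two_ne three_ne hs hr),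
    and_or_left, and_or_left, or_comm, or_assoc, or_assoc]

end Field

/-- For `d = (3+√13)/2`, a function `x : ℤ/3ℤ → ℝ` satisfies the degenerate equations
(Deg1')-(Deg3') iff `(x₀,x₁,x₂)` is, possibly after the swap `x₁ ↔ x₂`, one of three
explicit triples. -/
theorem zmod_three_degenerate_solutions (x : ZMod 3 → ℝ) :
    ((∑ h : ZMod 3, x h = -1 / ((3 + Real.sqrt 13) / 2)) ∧
     (∀ g : ZMod 3, ∑ h : ZMod 3, x h * x (h + g)
        = (if g = (0 : ZMod 3) then (1 : ℝ) else 0) - 1 / ((3 + Real.sqrt 13) / 2)) ∧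
     (∀ g : ZMod 3, ∑ h : ZMod 3, (x h) ^ 2 * x (h + g)
        = (x g) ^ 2 - 1 / ((3 + Real.sqrt 13) / 2)))
    ↔
    ((x 0 = (7 - Real.sqrt 13) / 6 ∧ x 1 = (1 - Real.sqrt 13) / 6 ∧
        x 2 = (1 - Real.sqrt 13) / 6) ∨
     (x 0 = (2 - Real.sqrt 13) / 3 ∧
        x 1 = (5 - Real.sqrt 13 + Real.sqrt (6 * (1 + Real.sqrt 13))) / 12 ∧
        x 2 = (5 - Real.sqrt 13 - Real.sqrt (6 * (1 + Real.sqrt 13))) / 12) ∨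
     (x 0 = (2 - Real.sqrt 13) / 3 ∧
        x 1 = (5 - Real.sqrt 13 - Real.sqrt (6 * (1 + Real.sqrt 13))) / 12 ∧
        x 2 = (5 - Real.sqrt 13 + Real.sqrt (6 * (1 + Real.sqrt 13))) / 12) ∨
     (x 0 = 0 ∧
        x 1 = (3 - Real.sqrt 13 + Real.sqrt (2 * (-1 + Real.sqrt 13))) / 4 ∧
        x 2 = (3 - Real.sqrt 13 - Real.sqrt (2 * (-1 + Real.sqrt 13))) / 4) ∨
     (x 0 = 0 ∧
        x 1 = (3 - Real.sqrt 13 - Real.sqrt (2 * (-1 + Real.sqrt 13))) / 4 ∧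
        x 2 = (3 - Real.sqrt 13 + Real.sqrt (2 * (-1 + Real.sqrt 13))) / 4)) :=
  zmod_three_degenerate_solutions_general two_ne_zero three_ne_zero
    (Real.sq_sqrt (by norm_num)) (Real.sq_sqrt (by positivity))
    (Real.sq_sqrt (by linarith [Real.one_le_sqrt.2 (by norm_num : (1 : ℝ) ≤ 13)])) x
end

section
/- Let G = ℤ/4ℤ and d = 2+√5. Every function x : G×G → ℝ satisfying x_{g+2l,h} = x_{g,h} = x_{g+h,h} for all g,h,l together with equations (Deg1)–(Deg3) satisfies x_{g,h} = x_{0,h} for all g,h; moreover, the 4-tuple (x_{0,0}, x_{0,1}, x_{0,2}, x_{0,3}) equals, possibly after replacing it by (x_{0,0}, x_{0,3}, x_{0,2}, x_{0,1}) (the action of the automorphism h ↦ −h), one of the following two 4-tuples, and conversely both define solutions: ((5−√5)/4, (1−√5)/4, (1−√5)/4, (1−√5)/4) and ((2−√5)/2, (1−√5+√(2(−1+√5)))/4, 1/2, (1−√5−√(2(−1+√5)))/4). -/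
open scoped BigOperators

/-- The degenerate system (shift conditions together with (Deg1)–(Deg3)) for
`x : G×G → ℝ` on a finite abelian group `G`. -/
def DegSol {G : Type} [AddCommGroup G] [Fintype G] [DecidableEq G]
    (x : G → G → ℝ) : Prop :=
  (∀ g h l : G, x (g + l + l) h = x g h) ∧
  (∀ g h : G, x g h = x (g + h) h) ∧
  (∀ g : G, ∑ l : G, x g l = -1 / dR G) ∧
  (∀ g g' : G, ∑ l : G, x g (l - g) * x g' (l - g')
      = (if g = g' then (1 : ℝ) else 0) - 1 / dR G) ∧
  (∀ g h : G, ∑ l : G, (x g l) ^ 2 * x (g - h) (l + h) = (x g h) ^ 2 - 1 / dR G)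

/-- The first explicit solution for `G = ℤ/4ℤ`. -/
noncomputable def xOneZ4 : ZMod 4 → ZMod 4 → ℝ := fun _ h =>
  if h = 0 then (5 - Real.sqrt 5) / 4 else (1 - Real.sqrt 5) / 4

/-- The second explicit solution for `G = ℤ/4ℤ`. -/
noncomputable def xTwoZ4 : ZMod 4 → ZMod 4 → ℝ := fun _ h =>
  if h = 0 then (2 - Real.sqrt 5) / 2
  else if h = 1 then (1 - Real.sqrt 5 + Real.sqrt (2 * (-1 + Real.sqrt 5))) / 4
  else if h = 2 then 1 / 2
  else (1 - Real.sqrt 5 - Real.sqrt (2 * (-1 + Real.sqrt 5))) / 4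

/-!
Since `d = φ³`, the constant `-1/d` is the cube of the golden conjugate `ψ`. The shift conditions
leave only `x 1 0` and `x 1 2` to compare with row `0`; (Deg1) and (Deg2) determine them up to a
swap, which (Deg3) undoes. For a solution independent of `g`, the sums `y 0 + y 2` and `y 1 + y 3`
have both sum and product `ψ³`, so they are `ψ` and `ψ²` in some order. The order `y 0 + y 2 = ψ`
contradicts (Deg3); in the other, (Deg3) is a quadratic for `y 2` with roots `ψ / 2` and `1 / 2`,
giving the two families, where `y 1` and `y 3` are `(ψ ± √(-ψ)) / 2` in the second.
-/

theorem dR_zmod_four : dR (ZMod 4) = 2 + √5 := by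
  have sqrt_twenty : √(4 ^ 2 + 4) = 2 * √5 := by
    rw [show (4 ^ 2 + 4 : ℝ) = 2 ^ 2 * 5 by norm_num, Real.sqrt_mul (by positivity),
      Real.sqrt_sq zero_le_two]
  rw [dR, ZMod.card, Nat.cast_ofNat, sqrt_twenty]
  ring

section GeneralGroup

variable {G : Type} [AddCommGroup G] [Fintype G] [DecidableEq G]

theorem DegSol.sum_sq {x : G → G → ℝ} (hx : DegSol x) (g : G) :
    ∑ l, x g l ^ 2 = 1 - 1 / dR G := by
  obtain ⟨-, -, -, deg2, -⟩ := hx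
  have h := deg2 g g
  rw [if_pos rfl] at h
  rw [← h, ← Equiv.sum_comp (Equiv.subRight g)]
  simp only [Equiv.subRight_apply, sq]

theorem DegSol.sum_cube {x : G → G → ℝ} (hx : DegSol x) (g : G) :
    ∑ l, x g l ^ 3 = x g 0 ^ 2 - 1 / dR G := by
  obtain ⟨-, -, -, -, deg3⟩ := hx
  simpa only [sub_zero, add_zero, ← pow_succ] using deg3 g 0

theorem degSol_const_iff (y : G → ℝ) :
    DegSol (fun _ => y) ↔
      ∑ l, y l = -1 / dR G ∧
      (∀ k, ∑ l, y l * y (l + k) = (if k = 0 then 1 else 0) - 1 / dR G) ∧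
      ∀ h, ∑ l, y l ^ 2 * y (l + h) = y h ^ 2 - 1 / dR G := by
  have correlation_shift (g g' : G) :
      ∑ l, y (l - g) * y (l - g') = ∑ l, y l * y (l + (g - g')) := by
    rw [← Equiv.sum_comp (Equiv.addRight g)]
    simp only [Equiv.coe_addRight, add_sub_cancel_right, add_sub_assoc]
  simp only [DegSol, implies_true, true_and, forall_const, correlation_shift]
  refine and_congr_right' (and_congr_left' ⟨fun h k => ?_, fun h g g' => ?_⟩)
  · simpa only [sub_zero] using h k 0
  · simpa only [sub_eq_zero] using h (g - g')

end GeneralGroup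

/-- The degenerate system on `ℤ/4ℤ` for a function `x_{g,h} = y_h` with
`(y_0, y_1, y_2, y_3) = (a, b, c, e)`, written out over any commutative ring with a parameter `t`
in the role of `-1/d`. Of the four correlations of (Deg2), those at `1` and `3` coincide and factor
as `even_mul_odd`. -/
structure IsConstRowZ4 {R : Type*} [CommRing R] (t a b c e : R) : Prop where
  sum : a + b + c + e = t
  sum_sq : a ^ 2 + b ^ 2 + c ^ 2 + e ^ 2 = 1 + t
  even_mul_odd : (a + c) * (b + e) = t
  antipodal : 2 * (a * c + b * e) = t
  cubic_zero : a ^ 3 + b ^ 3 + c ^ 3 + e ^ 3 = a ^ 2 + t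
  cubic_one : a ^ 2 * b + b ^ 2 * c + c ^ 2 * e + e ^ 2 * a = b ^ 2 + t
  cubic_two : a ^ 2 * c + b ^ 2 * e + c ^ 2 * a + e ^ 2 * b = c ^ 2 + t
  cubic_three : a ^ 2 * e + b ^ 2 * a + c ^ 2 * b + e ^ 2 * c = e ^ 2 + t

theorem forall_zmod_four {p : ZMod 4 → Prop} : (∀ k, p k) ↔ p 0 ∧ p 1 ∧ p 2 ∧ p 3 :=
  ⟨fun h => ⟨h 0, h 1, h 2, h 3⟩, fun h => Fin.forall_fin_succ.2 ⟨h.1, Fin.forall_fin_succ.2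
    ⟨h.2.1, Fin.forall_fin_two.2 h.2.2⟩⟩⟩

theorem sum_zmod_four {M : Type*} [AddCommMonoid M] (f : ZMod 4 → M) :
    ∑ l, f l = f 0 + f 1 + f 2 + f 3 :=
  Fin.sum_univ_four f

theorem degSol_const_iff_isConstRowZ4 (y : ZMod 4 → ℝ) :
    DegSol (fun _ => y) ↔ IsConstRowZ4 (-1 / dR (ZMod 4)) (y 0) (y 1) (y 2) (y 3) := by
  have add_1_1 : (1 + 1 : ZMod 4) = 2 := rfl
  have add_1_2 : (1 + 2 : ZMod 4) = 3 := rfl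
  have add_1_3 : (1 + 3 : ZMod 4) = 0 := rfl
  have add_2_1 : (2 + 1 : ZMod 4) = 3 := rfl
  have add_2_2 : (2 + 2 : ZMod 4) = 0 := rfl
  have add_2_3 : (2 + 3 : ZMod 4) = 1 := rfl
  have add_3_1 : (3 + 1 : ZMod 4) = 0 := rfl
  have add_3_2 : (3 + 2 : ZMod 4) = 1 := rfl
  have add_3_3 : (3 + 3 : ZMod 4) = 2 := rfl
  have one_ne : (1 : ZMod 4) ≠ 0 := by decide
  have two_ne : (2 : ZMod 4) ≠ 0 := by decide
  have three_ne : (3 : ZMod 4) ≠ 0 := by decide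
  simp only [degSol_const_iff, forall_zmod_four, sum_zmod_four, zero_add, add_zero,
    add_1_1, add_1_2, add_1_3, add_2_1, add_2_2, add_2_3, add_3_1, add_3_2, add_3_3,
    one_ne, two_ne, three_ne, if_true, if_false, neg_div]
  constructor
  · rintro ⟨s, ⟨c0, c1, c2, -⟩, q0, q1, q2, q3⟩
    constructor <;> linarith
  · rintro ⟨s, c0, c1, c2, q0, q1, q2, q3⟩
    refine ⟨s, ⟨?_, ?_, ?_, ?_⟩, ?_, ?_, ?_, ?_⟩ <;> linarith

theorem IsConstRowZ4.two_mul_mul_sub {R : Type*} [CommRing R] {t a b c e : R}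
    (h : IsConstRowZ4 t a b c e) :
    2 * (a * c) * ((a + c) - (b + e)) = 2 * c ^ 2 + t * (2 - (b + e)) := by
  linear_combination 2 * h.cubic_two - (b + e) * h.antipodal

section Domain

variable {R : Type*} [CommRing R] [IsDomain R] {ψ a b c e : R}

theorem eq_or_swap_of_add_eq_of_sq_add_sq_eq [NeZero (2 : R)]
    (hadd : a + b = c + e) (hsq : a ^ 2 + b ^ 2 = c ^ 2 + e ^ 2) :
    (a = c ∧ b = e) ∨ (a = e ∧ b = c) := by
  have roots : 2 * ((a - c) * (a - e)) = 0 := by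
    linear_combination hsq + (a - b - c - e) * hadd
  rcases mul_eq_zero.1 ((mul_eq_zero.1 roots).resolve_left two_ne_zero) with hac | hae
  · exact .inl ⟨by linear_combination hac, by linear_combination hadd - hac⟩
  · exact .inr ⟨by linear_combination hae, by linear_combination hadd - hae⟩

theorem IsConstRowZ4.add_eq_or_add_eq (hψ : ψ ^ 2 = ψ + 1) (h : IsConstRowZ4 (ψ ^ 3) a b c e) :
    (a + c = ψ ^ 2 ∧ b + e = ψ) ∨ (a + c = ψ ∧ b + e = ψ ^ 2) := by
  have roots : (a + c - ψ ^ 2) * (a + c - ψ) = 0 := by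
    linear_combination (a + c) * h.sum - h.even_mul_odd + ψ * (a + c) * hψ
  rcases mul_eq_zero.1 roots with hac | hac
  · exact .inl ⟨by linear_combination hac, by linear_combination h.sum - hac + ψ * hψ⟩
  · exact .inr ⟨by linear_combination hac, by linear_combination h.sum - hac + ψ * hψ⟩

theorem IsConstRowZ4.add_ne (hψ : ψ ^ 2 = ψ + 1) (h : IsConstRowZ4 (ψ ^ 3) a b c e) :
    a + c ≠ ψ := by
  intro hac
  have ψ_ne : ψ ≠ 0 := by rintro rfl; simp at hψ
  have hbe : b + e = ψ ^ 2 := by linear_combination h.sum - hac + ψ * hψ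
  have hc : 2 * c = ψ := by
    have hψc : ψ * (2 * c) = ψ * ψ := by grind [h.two_mul_mul_sub]
    exact mul_left_cancel₀ ψ_ne hψc
  have ha : 2 * a = ψ := by linear_combination 2 * hac - hc
  have hbe_mul : 4 * (b * e) = 2 * ψ ^ 3 - ψ ^ 2 := by
    linear_combination 2 * h.antipodal - 2 * c * ha - ψ * hc
  have four_mul : 4 * ψ ^ 2 = 0 := by grind [h.cubic_zero]
  have two_mul : 2 * ψ = 0 := by
    have sq_eq : (2 * ψ) ^ 2 = 0 := by linear_combination four_mul
    exact eq_zero_of_pow_eq_zero sq_eq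
  have pow_four : ψ ^ 4 = 0 := by
    linear_combination (a * c + b * e) * two_mul - ψ * h.antipodal
  exact ψ_ne (eq_zero_of_pow_eq_zero pow_four)

theorem IsConstRowZ4.two_mul_eq (hψ : ψ ^ 2 = ψ + 1) (h : IsConstRowZ4 (ψ ^ 3) a b c e) :
    (2 * c = ψ ∧ 2 * a = 2 + ψ ∧ 2 * b = ψ ∧ 2 * e = ψ) ∨
      (2 * c = 1 ∧ 2 * a = 2 * ψ + 1 ∧ (2 * b - ψ) ^ 2 = -ψ ∧ b + e = ψ) := by
  obtain ⟨hac, hbe⟩ :=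
    (h.add_eq_or_add_eq hψ).resolve_right fun sums => h.add_ne hψ sums.1
  have roots : (2 * c - ψ) * (2 * c - 1) = 0 := by grind [h.two_mul_mul_sub]
  rcases mul_eq_zero.1 roots with hc | hc
  · have hb : 2 * b - ψ = 0 := by
      have sq_eq : (2 * b - ψ) ^ 2 = 0 := by grind [h.antipodal]
      exact eq_zero_of_pow_eq_zero sq_eq
    exact .inl (by grind)
  · exact .inr (by grind [h.antipodal])

end Domain

section Field

variable {K : Type*} [Field K] [NeZero (2 : K)] {ψ ρ a b c e : K}

theorem isConstRowZ4_xOne (hψ : ψ ^ 2 = ψ + 1) :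
    IsConstRowZ4 (ψ ^ 3) (1 + ψ / 2) (ψ / 2) (ψ / 2) (ψ / 2) := by
  have two_ne : (2 : K) ≠ 0 := two_ne_zero
  constructor <;> grind

theorem isConstRowZ4_xTwo (hψ : ψ ^ 2 = ψ + 1) (hρ : ρ ^ 2 = -ψ) :
    IsConstRowZ4 (ψ ^ 3) (ψ + 1 / 2) ((ψ + ρ) / 2) (1 / 2) ((ψ - ρ) / 2) := by
  have two_ne : (2 : K) ≠ 0 := two_ne_zero
  constructor <;> grind

theorem isConstRowZ4_iff (hψ : ψ ^ 2 = ψ + 1) (hρ : ρ ^ 2 = -ψ) :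
    IsConstRowZ4 (ψ ^ 3) a b c e ↔
      (a = 1 + ψ / 2 ∧ b = ψ / 2 ∧ c = ψ / 2 ∧ e = ψ / 2) ∨
      (a = ψ + 1 / 2 ∧ b = (ψ + ρ) / 2 ∧ c = 1 / 2 ∧ e = (ψ - ρ) / 2) ∨
      (a = ψ + 1 / 2 ∧ b = (ψ - ρ) / 2 ∧ c = 1 / 2 ∧ e = (ψ + ρ) / 2) := by
  have two_ne : (2 : K) ≠ 0 := two_ne_zero
  constructor
  · intro h
    rcases h.two_mul_eq hψ with ⟨hc, ha, hb, he⟩ | ⟨hc, ha, hb, hbe⟩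
    · exact .inl (by grind)
    · rcases sq_eq_sq_iff_eq_or_eq_neg.1 (hb.trans hρ.symm) with hb | hb
      · exact .inr (.inl (by grind))
      · exact .inr (.inr (by grind))
  · rintro (⟨rfl, rfl, rfl, rfl⟩ | ⟨rfl, rfl, rfl, rfl⟩ | ⟨rfl, rfl, rfl, rfl⟩)
    · exact isConstRowZ4_xOne hψ
    · exact isConstRowZ4_xTwo hψ hρ
    · simpa only [sub_neg_eq_add, ← sub_eq_add_neg] using
        isConstRowZ4_xTwo hψ ((neg_sq ρ).trans hρ)

end Field

section GoldenRatio

open Real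
open scoped goldenRatio

theorem goldenRatio_cube : φ ^ 3 = 2 + √5 := by
  have sq_five : √5 ^ 2 = 5 := sq_sqrt (by norm_num)
  linear_combination (√5 + 3) / 8 * sq_five

theorem neg_one_div_dR_zmod_four : -1 / dR (ZMod 4) = ψ ^ 3 := by
  rw [dR_zmod_four, ← goldenRatio_cube, div_eq_iff (pow_ne_zero 3 goldenRatio_ne_zero),
    ← mul_pow, goldenConj_mul_goldenRatio]
  norm_num

theorem two_mul_sqrt_neg_goldenConj : 2 * √(-ψ) = √(2 * (-1 + √5)) := by
  rw [goldenConj, show 2 * (-1 + √5) = 2 ^ 2 * -((1 - √5) / 2) by ring,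
    sqrt_mul (by positivity), sqrt_sq zero_le_two]

theorem isConstRowZ4_goldenConj_iff {a b c e : ℝ} :
    IsConstRowZ4 (ψ ^ 3) a b c e ↔
      (a = (5 - √5) / 4 ∧ b = (1 - √5) / 4 ∧ c = (1 - √5) / 4 ∧ e = (1 - √5) / 4) ∨
      (a = (2 - √5) / 2 ∧ b = (1 - √5 + √(2 * (-1 + √5))) / 4 ∧ c = 1 / 2 ∧
        e = (1 - √5 - √(2 * (-1 + √5))) / 4) ∨
      (a = (2 - √5) / 2 ∧ b = (1 - √5 - √(2 * (-1 + √5))) / 4 ∧ c = 1 / 2 ∧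
        e = (1 - √5 + √(2 * (-1 + √5))) / 4) := by
  rw [isConstRowZ4_iff goldenConj_sq (sq_sqrt (neg_nonneg.2 goldenConj_neg.le)),
    ← two_mul_sqrt_neg_goldenConj,
    show (5 - √5) / 4 = 1 + ψ / 2 by ring,
    show (1 - √5) / 4 = ψ / 2 by ring,
    show (2 - √5) / 2 = ψ + 1 / 2 by ring,
    show (1 - √5 + 2 * √(-ψ)) / 4 = (ψ + √(-ψ)) / 2 by ring,
    show (1 - √5 - 2 * √(-ψ)) / 4 = (ψ - √(-ψ)) / 2 by ring]

theorem degSol_const_iff_isConstRowZ4_goldenConj (y : ZMod 4 → ℝ) :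
    DegSol (fun _ => y) ↔ IsConstRowZ4 (ψ ^ 3) (y 0) (y 1) (y 2) (y 3) := by
  rw [degSol_const_iff_isConstRowZ4, neg_one_div_dR_zmod_four]

namespace DegSol

variable {x : ZMod 4 → ZMod 4 → ℝ}

theorem row_two_eq (hx : DegSol x) : x 2 = x 0 :=
  funext fun h => hx.1 0 h 1

theorem row_three_eq (hx : DegSol x) : x 3 = x 1 :=
  funext fun h => hx.1 1 h 1

theorem row_one_apply_one (hx : DegSol x) : x 1 1 = x 0 1 :=
  (hx.2.1 0 1).symm

theorem row_one_apply_three (hx : DegSol x) : x 1 3 = x 0 3 := by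
  rw [← hx.row_three_eq]
  exact (hx.2.1 0 3).symm

theorem row_one_even_add (hx : DegSol x) : x 1 0 + x 1 2 = x 0 0 + x 0 2 := by
  obtain ⟨-, -, deg1, -, -⟩ := id hx
  have sum_eq := (deg1 1).trans (deg1 0).symm
  rw [sum_zmod_four, sum_zmod_four, hx.row_one_apply_one, hx.row_one_apply_three] at sum_eq
  linear_combination sum_eq

theorem even_add_mul_odd_add (hx : DegSol x) :
    (x 0 0 + x 0 2) * (x 0 1 + x 0 3) = -1 / dR (ZMod 4) := by
  obtain ⟨-, -, -, deg2, -⟩ := id hx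
  have rows_zero_one := deg2 0 1
  have rows_zero_three := deg2 0 3
  rw [sum_zmod_four, if_neg (by decide)] at rows_zero_one rows_zero_three
  change x 0 0 * x 1 3 + x 0 1 * x 1 0 + x 0 2 * x 1 1 + x 0 3 * x 1 2 = _ at rows_zero_one
  change x 0 0 * x 3 1 + x 0 1 * x 3 2 + x 0 2 * x 3 3 + x 0 3 * x 3 0 = _ at rows_zero_three
  rw [hx.row_three_eq] at rows_zero_three
  rw [hx.row_one_apply_one, hx.row_one_apply_three] at rows_zero_one rows_zero_three
  linear_combination (rows_zero_one + rows_zero_three) / 2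
    - (x 0 1 + x 0 3) / 2 * hx.row_one_even_add

theorem row_one_eq (hx : DegSol x) : x 1 = x 0 := by
  have sq_eq : x 1 0 ^ 2 + x 1 2 ^ 2 = x 0 0 ^ 2 + x 0 2 ^ 2 := by
    have h := (hx.sum_sq 1).trans (hx.sum_sq 0).symm
    rw [sum_zmod_four, sum_zmod_four, hx.row_one_apply_one, hx.row_one_apply_three] at h
    linear_combination h
  have cube_eq : x 1 0 ^ 3 + x 1 2 ^ 3 - x 1 0 ^ 2 = x 0 0 ^ 3 + x 0 2 ^ 3 - x 0 0 ^ 2 := by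
    have h1 := hx.sum_cube 1
    have h0 := hx.sum_cube 0
    rw [sum_zmod_four] at h1 h0
    rw [hx.row_one_apply_one, hx.row_one_apply_three] at h1
    linear_combination h1 - h0
  have even_eq : x 1 0 = x 0 0 ∧ x 1 2 = x 0 2 := by
    rcases eq_or_swap_of_add_eq_of_sq_add_sq_eq hx.row_one_even_add sq_eq with h | ⟨h0, h2⟩
    · exact h
    · rw [h0, h2] at cube_eq
      have even_sum_ne : x 0 0 + x 0 2 ≠ 0 := by
        apply left_ne_zero_of_mul
        rw [hx.even_add_mul_odd_add, neg_one_div_dR_zmod_four]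
        exact pow_ne_zero 3 goldenConj_ne_zero
      have mul_eq : (x 0 0 + x 0 2) * x 0 0 = (x 0 0 + x 0 2) * x 0 2 := by
        linear_combination cube_eq
      have row_zero : x 0 0 = x 0 2 := mul_left_cancel₀ even_sum_ne mul_eq
      exact ⟨h0.trans row_zero.symm, h2.trans row_zero⟩
  exact funext (forall_zmod_four.2
    ⟨even_eq.1, hx.row_one_apply_one, even_eq.2, hx.row_one_apply_three⟩)

theorem row_eq (hx : DegSol x) (g : ZMod 4) : x g = x 0 := by
  revert g
  exact forall_zmod_four.2
    ⟨rfl, hx.row_one_eq, hx.row_two_eq, hx.row_three_eq.trans hx.row_one_eq⟩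

theorem eq_const (hx : DegSol x) : x = fun _ => x 0 :=
  funext hx.row_eq

end DegSol

end GoldenRatio

/-- For `G = ℤ/4ℤ` (where `d = 2+√5`): every solution of the degenerate system satisfies
`x_{g,h} = x_{0,h}`, and its value tuple is, possibly after the swap `h ↦ −h`, one of two
explicit tuples; conversely both tuples define solutions. -/
theorem degSol_zmod_four_classification :
    dR (ZMod 4) = 2 + Real.sqrt 5 ∧
    (∀ x : ZMod 4 → ZMod 4 → ℝ, DegSol x →
      (∀ g h : ZMod 4, x g h = x 0 h) ∧
      ((x 0 0 = (5 - Real.sqrt 5) / 4 ∧ x 0 1 = (1 - Real.sqrt 5) / 4 ∧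
          x 0 2 = (1 - Real.sqrt 5) / 4 ∧ x 0 3 = (1 - Real.sqrt 5) / 4) ∨
       (x 0 0 = (2 - Real.sqrt 5) / 2 ∧
          x 0 1 = (1 - Real.sqrt 5 + Real.sqrt (2 * (-1 + Real.sqrt 5))) / 4 ∧
          x 0 2 = 1 / 2 ∧
          x 0 3 = (1 - Real.sqrt 5 - Real.sqrt (2 * (-1 + Real.sqrt 5))) / 4) ∨
       (x 0 0 = (2 - Real.sqrt 5) / 2 ∧
          x 0 1 = (1 - Real.sqrt 5 - Real.sqrt (2 * (-1 + Real.sqrt 5))) / 4 ∧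
          x 0 2 = 1 / 2 ∧
          x 0 3 = (1 - Real.sqrt 5 + Real.sqrt (2 * (-1 + Real.sqrt 5))) / 4))) ∧
    DegSol xOneZ4 ∧ DegSol xTwoZ4 := by
  refine ⟨dR_zmod_four, fun x hx => ⟨fun g => congrFun (hx.row_eq g), ?_⟩, ?_, ?_⟩
  · apply isConstRowZ4_goldenConj_iff.1
    rw [← degSol_const_iff_isConstRowZ4_goldenConj, ← hx.eq_const]
    exact hx
  · exact (degSol_const_iff_isConstRowZ4_goldenConj (xOneZ4 0)).2
      (isConstRowZ4_goldenConj_iff.2 (.inl ⟨rfl, rfl, rfl, rfl⟩))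
  · exact (degSol_const_iff_isConstRowZ4_goldenConj (xTwoZ4 0)).2
      (isConstRowZ4_goldenConj_iff.2 (.inr (.inl ⟨rfl, rfl, rfl, rfl⟩)))
end
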